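/- (Uniform convergence of action-value functions.) Under the same assumptions (compact spaces; Lipschitz p, p⁰, r; Lipschitz parametrization Γ and joint policy π̃^θ), let Q^θ(x⁰, μ, u⁰, ξ) := E[ Σ_{t≥0} γ^t r(x⁰_t, u⁰_t, μ_t) | x⁰_0 = x⁰, μ_0 = μ, u⁰_0 = u⁰, ξ_0 = ξ ] be the action-value function of the limiting M3FC MDP under joint policy π̃^θ, and let Q̂^θ(x⁰, μ, u⁰, ξ) := E[ Σ_{t≥0} γ^t r(x_t^{0,N}, u_t^{0,N}, μ_t^N) | x_0^{0,N} = x⁰, μ_0 = μ, u_0^{0,N} = u⁰, ξ_0^N = ξ ] be its N-agent counterpart. Then Q̂^θ → Q^θ uniformly on 𝒳⁰ × 𝒫(𝒳) × 𝒰⁰ × Ξ (and uniformly over θ) as N → ∞. -/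

import Mathlib

open MeasureTheory

noncomputable instance {X : Type*} [MeasurableSpace X] : MeasurableSpace (ProbabilityMeasure X) :=
  inferInstanceAs (MeasurableSpace {μ : Measure X // IsProbabilityMeasure μ})

/-- `W₁` distance on probability measures, via Kantorovich duality. -/
noncomputable def W1 {X : Type*} [MeasurableSpace X] [PseudoMetricSpace X]
    (μ ν : ProbabilityMeasure X) : ℝ :=
  ⨆ f : {f : X → ℝ // LipschitzWith 1 f},
    |∫ x, (f : X → ℝ) x ∂(μ : Measure X) - ∫ x, (f : X → ℝ) x ∂(ν : Measure X)|

/-- Empirical measure of `N` points (an arbitrary probability measure if `N = 0`). -/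
noncomputable def emp {X : Type*} [MeasurableSpace X] [Nonempty X] (N : ℕ) (x : Fin N → X) :
    ProbabilityMeasure X := by
  classical
  exact if hN : N = 0 then ⟨Measure.dirac (Classical.arbitrary X), inferInstance⟩
  else ⟨(N : ENNReal)⁻¹ • ∑ i : Fin N, Measure.dirac (x i), by
    constructor
    simp only [Measure.smul_apply, Measure.coe_finset_sum, Finset.sum_apply,
      Measure.dirac_apply' _ MeasurableSet.univ, smul_eq_mul]
    simp only [Set.indicator_univ, Pi.one_apply, Finset.sum_const, Finset.card_univ,
      Fintype.card_fin, nsmul_eq_mul, mul_one]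
    exact ENNReal.inv_mul_cancel (by exact_mod_cast hN) (by simp)⟩

/-- Law of `(x⁰_t, (u⁰_t, ξ_t), (x^{i,N}_t)_i)` in the `N`-agent M3FC system under the
parametrized joint policy `π̃^θ` and decision-rule map `Γ`, started from the initial law `ι`:
at each step the joint action `(u⁰,ξ)` is sampled from `π̃^θ(·|x⁰,μ^N)`, each minor agent
samples its action from `Γ(ξ)(·|xⁱ)`, and states transition through `p`, `p⁰`. -/
noncomputable def pLawNFrom {X U X0 U0 Xi Θ : Type*} [MeasurableSpace X] [Nonempty X]
    [MeasurableSpace U] [MeasurableSpace X0] [MeasurableSpace U0] [MeasurableSpace Xi]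
    (p : X → U → X0 → U0 → ProbabilityMeasure X → ProbabilityMeasure X)
    (p0 : X0 → U0 → ProbabilityMeasure X → ProbabilityMeasure X0)
    (Γ : Xi → X → ProbabilityMeasure U)
    (pit : Θ → X0 → ProbabilityMeasure X → ProbabilityMeasure (U0 × Xi))
    (θ : Θ) (N : ℕ) (ι : Measure (X0 × (U0 × Xi) × (Fin N → X))) :
    ℕ → Measure (X0 × (U0 × Xi) × (Fin N → X))
  | 0 => ι
  | t + 1 => (pLawNFrom p p0 Γ pit θ N ι t).bind fun s =>
      (((p0 s.1 s.2.1.1 (emp N s.2.2) : Measure X0)).prod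
        (Measure.pi fun i => ((Γ s.2.1.2 (s.2.2 i) : Measure U)).bind
          fun u => (p (s.2.2 i) u s.1 s.2.1.1 (emp N s.2.2) : Measure X))).bind
        fun y => ((pit θ y.1 (emp N y.2) : Measure (U0 × Xi))).map fun a => (y.1, a, y.2)

/-- Law of `(x⁰_t, (u⁰_t, ξ_t), μ_t)` in the limiting M3FC process under the parametrized
joint policy `π̃^θ`, where `TG x⁰ u⁰ ξ μ` is the deterministic mean field transition
`T(x⁰,u⁰,μ, μ ⊗ Γ(ξ))`, started from the initial law `ι`. -/
noncomputable def pLimLawFrom {X U0 X0 Xi Θ : Type*} [MeasurableSpace X]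
    [MeasurableSpace X0] [MeasurableSpace U0] [MeasurableSpace Xi]
    (p0 : X0 → U0 → ProbabilityMeasure X → ProbabilityMeasure X0)
    (pit : Θ → X0 → ProbabilityMeasure X → ProbabilityMeasure (U0 × Xi))
    (TG : X0 → U0 → Xi → ProbabilityMeasure X → ProbabilityMeasure X)
    (θ : Θ) (ι : Measure (X0 × (U0 × Xi) × ProbabilityMeasure X)) :
    ℕ → Measure (X0 × (U0 × Xi) × ProbabilityMeasure X)
  | 0 => ι
  | t + 1 => (pLimLawFrom p0 pit TG θ ι t).bind fun s =>
      ((p0 s.1 s.2.1.1 s.2.2 : Measure X0)).bind fun y0 =>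
        ((pit θ y0 (TG s.1 s.2.1.1 s.2.1.2 s.2.2) : Measure (U0 × Xi))).map
          fun a => (y0, a, TG s.1 s.2.1.1 s.2.1.2 s.2.2)

set_option linter.unusedSectionVars false

section helpers
open Filter Topology ProbabilityTheory

theorem scale_le {α : Type*} [MeasurableSpace α] (μ ν : Measure α) [IsProbabilityMeasure μ]
    [IsProbabilityMeasure ν] (d : α → α → ℝ) (c : ℝ)
    (H : ∀ f : α → ℝ, (∀ a b, |f a - f b| ≤ d a b) → |∫ x, f x ∂μ - ∫ x, f x ∂ν| ≤ c)
    (L : ℝ) (hL : 0 ≤ L) (f : α → ℝ) (hf : ∀ a b, |f a - f b| ≤ L * d a b) :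
    |∫ x, f x ∂μ - ∫ x, f x ∂ν| ≤ L * c := by
  rcases hL.eq_or_lt with h | h
  · subst h
    have hc : ∀ a b, f a = f b := fun a b => by
      have := hf a b
      rw [zero_mul] at this
      exact sub_eq_zero.1 (abs_eq_zero.1 (le_antisymm this (abs_nonneg _)))
    obtain ⟨a⟩ : Nonempty α := nonempty_of_isProbabilityMeasure μ
    have : f = fun _ => f a := funext fun b => hc b a
    rw [this]; simp
  · have := H (fun x => L⁻¹ * f x) (fun a b => by
      rw [← mul_sub, abs_mul, abs_of_pos (inv_pos.2 h), inv_mul_le_iff₀ h]; exact hf a b)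
    rw [integral_const_mul, integral_const_mul, ← mul_sub, abs_mul, abs_of_pos (inv_pos.2 h),
      inv_mul_le_iff₀ h] at this
    exact this

theorem lip1_iff {α : Type*} [PseudoMetricSpace α] (f : α → ℝ) :
    LipschitzWith 1 f ↔ ∀ a b, |f a - f b| ≤ dist a b := by
  rw [lipschitzWith_iff_dist_le_mul]; simp [Real.dist_eq]

theorem lip_cont {α : Type*} [PseudoMetricSpace α] {f : α → ℝ} {L : ℝ} (hL : 0 ≤ L)
    (h : ∀ a b, |f a - f b| ≤ L * dist a b) : Continuous f := by
  have : LipschitzWith ⟨L, hL⟩ f := LipschitzWith.of_dist_le_mul (fun a b => by rw [Real.dist_eq]; exact h a b)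
  exact this.continuous

theorem cont_integrable {α : Type*} [TopologicalSpace α] [CompactSpace α] [MeasurableSpace α]
    [OpensMeasurableSpace α] (μ : Measure α) [IsFiniteMeasure μ] {f : α → ℝ}
    (hf : Continuous f) : Integrable f μ :=
  hf.integrable_of_hasCompactSupport (HasCompactSupport.of_compactSpace f)

section W
variable {X : Type*} [MetricSpace X] [CompactSpace X] [MeasurableSpace X] [BorelSpace X]

theorem W1_bdd (μ ν : ProbabilityMeasure X) :
    BddAbove (Set.range fun f : {f : X → ℝ // LipschitzWith 1 f} =>
      |∫ x, (f : X → ℝ) x ∂(μ : Measure X) - ∫ x, (f : X → ℝ) x ∂(ν : Measure X)|) := by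
  refine ⟨2 * Metric.diam (Set.univ : Set X), ?_⟩
  rintro _ ⟨⟨f, hf⟩, rfl⟩
  obtain ⟨a⟩ : Nonempty X := μ.nonempty
  have key : ∀ m : ProbabilityMeasure X, |∫ x, f x ∂(m : Measure X) - f a|
      ≤ Metric.diam (Set.univ : Set X) := by
    intro m
    have : ∫ x, f x ∂(m : Measure X) - f a = ∫ x, (f x - f a) ∂(m : Measure X) := by
      rw [integral_sub (cont_integrable _ hf.continuous) (integrable_const _)]; simp
    rw [this]
    have h2 := norm_integral_le_of_norm_le_const (μ := (m : Measure X)) (f := fun x => f x - f a)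
      (C := Metric.diam (Set.univ : Set X)) (Eventually.of_forall fun x => by
        refine ((lip1_iff f).1 hf x a).trans ?_
        exact Metric.dist_le_diam_of_mem isCompact_univ.isBounded trivial trivial)
    simpa using h2
  have h1 := key μ
  have h2 := key ν
  rw [abs_le] at *
  constructor <;> simp only <;> linarith [h1.1, h1.2, h2.1, h2.2]

theorem W1_nonneg (μ ν : ProbabilityMeasure X) : 0 ≤ W1 μ ν :=
  Real.iSup_nonneg fun _ => abs_nonneg _

theorem le_W1 (μ ν : ProbabilityMeasure X) (L : ℝ) (hL : 0 ≤ L) (f : X → ℝ)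
    (hf : ∀ a b, |f a - f b| ≤ L * dist a b) :
    |∫ x, f x ∂(μ : Measure X) - ∫ x, f x ∂(ν : Measure X)| ≤ L * W1 μ ν := by
  refine scale_le _ _ dist _ (fun g hg => ?_) L hL f hf
  exact le_ciSup (W1_bdd μ ν) ⟨g, (lip1_iff g).2 hg⟩

theorem W1_le (μ ν : ProbabilityMeasure X) (c : ℝ)
    (H : ∀ f : X → ℝ, LipschitzWith 1 f →
      |∫ x, f x ∂(μ : Measure X) - ∫ x, f x ∂(ν : Measure X)| ≤ c) : W1 μ ν ≤ c := by
  have : Nonempty {f : X → ℝ // LipschitzWith 1 f} := ⟨⟨fun _ => 0, LipschitzWith.const' 0⟩⟩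
  exact ciSup_le fun f => H f f.2

theorem W1_self (μ : ProbabilityMeasure X) : W1 μ μ = 0 :=
  le_antisymm (W1_le _ _ _ fun f _ => by simp) (W1_nonneg _ _)

theorem W1_comm (μ ν : ProbabilityMeasure X) : W1 μ ν = W1 ν μ := by
  unfold W1; simp_rw [abs_sub_comm]

theorem W1_triangle (μ ν κ : ProbabilityMeasure X) : W1 μ κ ≤ W1 μ ν + W1 ν κ := by
  refine W1_le _ _ _ fun f hf => ?_
  have h1 := le_W1 μ ν 1 zero_le_one f (by simpa using (lip1_iff f).1 hf)
  have h2 := le_W1 ν κ 1 zero_le_one f (by simpa using (lip1_iff f).1 hf)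
  rw [abs_le] at *
  constructor <;> linarith [h1.1, h1.2, h2.1, h2.2]

theorem W1_net (ε : ℝ) (hε : 0 < ε) : ∃ F : Finset (BoundedContinuousFunction X ℝ),
    (∀ f ∈ F, LipschitzWith 1 f) ∧ ∀ μ ν : ProbabilityMeasure X,
      W1 μ ν ≤ ε + ∑ f ∈ F,
        |∫ x, f x ∂(μ : Measure X) - ∫ x, f x ∂(ν : Measure X)| := by
  classical
  rcases isEmpty_or_nonempty X with hX | ⟨⟨a⟩⟩
  · exact ⟨∅, by simp, fun μ => (hX.false (Classical.choice μ.nonempty)).elim⟩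
  let A : Set (BoundedContinuousFunction X ℝ) := {f | LipschitzWith 1 f ∧ f a = 0}
  set D := Metric.diam (Set.univ : Set X)
  have hA : IsCompact (closure A) := by
    refine BoundedContinuousFunction.arzela_ascoli (Set.Icc (-D) D) isCompact_Icc A ?_ ?_
    · rintro f x ⟨hf, hfa⟩
      have := (lip1_iff f).1 hf x a
      rw [hfa, sub_zero] at this
      exact abs_le.1 (this.trans
        (Metric.dist_le_diam_of_mem isCompact_univ.isBounded trivial trivial))
    · refine (LipschitzWith.uniformEquicontinuous _ 1 ?_).equicontinuous
      rintro ⟨f, hf⟩; exact hf.1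
  have hT : TotallyBounded A := hA.totallyBounded.subset subset_closure
  obtain ⟨t, htA, htf, ht⟩ := Metric.finite_approx_of_totallyBounded hT (ε / 2) (by positivity)
  refine ⟨htf.toFinset, fun f hf => (htA (htf.mem_toFinset.1 hf)).1, fun μ ν => ?_⟩
  refine W1_le _ _ _ fun f hf => ?_
  let g : BoundedContinuousFunction X ℝ :=
    BoundedContinuousFunction.mkOfCompact ⟨fun x => f x - f a, by
      exact hf.continuous.sub continuous_const⟩
  have hg : g ∈ A := by
    refine ⟨(lip1_iff _).2 fun x y => ?_, by simp [g]⟩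
    simpa [g] using (lip1_iff f).1 hf x y
  obtain ⟨h, hht, hh⟩ := Set.mem_iUnion₂.1 (ht hg)
  rw [Metric.mem_ball] at hh
  have key : ∀ m : ProbabilityMeasure X,
      |∫ x, f x ∂(m : Measure X) - f a - ∫ x, h x ∂(m : Measure X)| ≤ ε / 2 := by
    intro m
    have : ∫ x, f x ∂(m : Measure X) - f a - ∫ x, h x ∂(m : Measure X)
        = ∫ x, (f x - f a - h x) ∂(m : Measure X) := by
      have i1 := cont_integrable (m : Measure X) hf.continuous
      rw [integral_sub (f := fun x => f x - f a) (i1.sub (integrable_const _))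
        (cont_integrable _ h.continuous), integral_sub i1 (integrable_const _)]
      simp
    rw [this]
    have h2 := norm_integral_le_of_norm_le_const (μ := (m : Measure X))
      (f := fun x => f x - f a - h x)
      (C := ε / 2) (Eventually.of_forall fun x => by
        have := (BoundedContinuousFunction.dist_coe_le_dist (f := g) (g := h) x).trans hh.le
        rw [Real.dist_eq] at this; exact this)
    simpa using h2
  have h1 := key μ
  have h2 := key ν
  have h3 := Finset.single_le_sum (f := fun f : BoundedContinuousFunction X ℝ =>
    |∫ x, f x ∂(μ : Measure X) - ∫ x, f x ∂(ν : Measure X)|) (fun _ _ => abs_nonneg _)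
    (htf.mem_toFinset.2 hht)
  have h4 := abs_le.1 h3
  rw [abs_le] at h1 h2 ⊢
  constructor <;> linarith [h1.1, h1.2, h2.1, h2.2, h4.1, h4.2]

theorem W1_tendsto (μ : ProbabilityMeasure X) : Tendsto (fun ν => W1 ν μ) (𝓝 μ) (𝓝 0) := by
  rw [Metric.tendsto_nhds]
  intro ε hε
  obtain ⟨F, hF, hW⟩ := W1_net (X := X) (ε / 2) (by positivity)
  have hc : Continuous fun ν : ProbabilityMeasure X => ∑ f ∈ F,
        |∫ x, f x ∂(ν : Measure X) - ∫ x, f x ∂(μ : Measure X)| := by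
    refine continuous_finsetSum _ fun f _ => Continuous.abs (Continuous.sub ?_ continuous_const)
    exact ProbabilityMeasure.continuous_integral_boundedContinuousFunction f
  have := (hc.tendsto μ).eventually (gt_mem_nhds (show _ < ε / 2 by
    simpa using hε))
  filter_upwards [this] with ν hν
  rw [Real.dist_eq, sub_zero, abs_of_nonneg (W1_nonneg _ _)]
  linarith [hW ν μ]

/-- maps into `P(Y)` tested by 1-Lipschitz functions -/
theorem cont_of_lip {Z : Type*} [TopologicalSpace Z] [FirstCountableTopology Z]
    (κ : Z → ProbabilityMeasure X) (H : ∀ f : X → ℝ, LipschitzWith 1 f → Continuous fun z => ∫ x, f x ∂(κ z : Measure X)) :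
    Continuous κ := by
  rw [continuous_iff_continuousAt]
  intro z
  rw [ContinuousAt, tendsto_iff_forall_lipschitz_integral_tendsto]
  rintro f - ⟨L, hL⟩
  have hpos : (0 : ℝ) < L + 1 := by positivity
  have h1 : LipschitzWith 1 fun x => ((L : ℝ) + 1)⁻¹ * f x := by
    rw [lip1_iff]
    intro a b
    rw [← mul_sub, abs_mul, abs_of_pos (inv_pos.2 hpos), inv_mul_le_iff₀ hpos]
    have := hL.dist_le_mul a b
    rw [Real.dist_eq] at this
    nlinarith [dist_nonneg (x := a) (y := b)]
  have h2 := ((H _ h1).const_mul ((L : ℝ) + 1)).tendsto z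
  simp_rw [integral_const_mul, ← mul_assoc, mul_inv_cancel₀ hpos.ne', one_mul] at h2
  exact h2

theorem meas_coe {Y : Type*} [TopologicalSpace Y] [HasOuterApproxClosed Y] [MeasurableSpace Y]
    [BorelSpace Y] {Z : Type*} [TopologicalSpace Z] [MeasurableSpace Z] [OpensMeasurableSpace Z]
    (κ : Z → ProbabilityMeasure Y) (hκ : Continuous κ) :
    Measurable fun z => (κ z : Measure Y) := by
  refine Measurable.measure_of_isPiSystem_of_isProbabilityMeasure (S := {s | IsClosed s}) ?_
    isPiSystem_isClosed ?_
  · rw [BorelSpace.measurable_eq (α := Y), borel_eq_generateFrom_isClosed]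
  · intro s hs
    refine measurable_of_tendsto_metrizable (f := fun n z =>
      ∫⁻ x, (IsClosed.apprSeq hs n x : ENNReal) ∂(κ z : Measure Y)) (fun n => ?_) ?_
    · exact ((ProbabilityMeasure.continuous_lintegral_boundedContinuousFunction
        (hs.apprSeq n)).comp hκ).measurable
    · rw [tendsto_pi_nhds]
      exact fun z => HasOuterApproxClosed.tendsto_lintegral_apprSeq hs _

theorem meas_int (f : C(X, ℝ)) :
    Measurable fun μ : ProbabilityMeasure X => ∫ x, f x ∂(μ : Measure X) := by
  let k : Kernel (ProbabilityMeasure X) X := ⟨fun μ => (μ : Measure X), measurable_subtype_coe⟩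
  exact (StronglyMeasurable.integral_kernel (κ := k) f.continuous.stronglyMeasurable).measurable

instance opensPM : OpensMeasurableSpace (ProbabilityMeasure X) := by
  let Φ : ProbabilityMeasure X → ℕ → ℝ := fun μ n =>
    ∫ x, (TopologicalSpace.denseSeq C(X, ℝ) n) x ∂(μ : Measure X)
  have hc : Continuous Φ := continuous_pi fun n =>
    ProbabilityMeasure.continuous_integral_continuousMap _
  have hm : Measurable Φ := measurable_pi_lambda _ fun n => meas_int _
  have hi : Function.Injective Φ := by
    intro μ ν h
    have hC : ∀ m : ProbabilityMeasure X,
        Continuous fun f : C(X, ℝ) => ∫ x, f x ∂(m : Measure X) := by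
      intro m
      refine lip_cont (L := 1) zero_le_one fun f g => ?_
      rw [← integral_sub (cont_integrable _ f.continuous) (cont_integrable _ g.continuous), one_mul]
      have h2 := norm_integral_le_of_norm_le_const (μ := (m : Measure X))
        (f := fun x => f x - g x) (C := dist f g) (Eventually.of_forall fun x => by
          rw [← dist_eq_norm]; exact ContinuousMap.dist_apply_le_dist x)
      simpa using h2
    have : (fun f : C(X, ℝ) => ∫ x, f x ∂(μ : Measure X))
        = fun f : C(X, ℝ) => ∫ x, f x ∂(ν : Measure X) :=
      Continuous.ext_on (TopologicalSpace.denseRange_denseSeq C(X, ℝ)) (hC μ) (hC ν) (by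
        rintro _ ⟨n, rfl⟩; exact congrFun h n)
    apply ProbabilityMeasure.toMeasure_injective
    refine ext_of_forall_integral_eq_of_IsFiniteMeasure fun f => ?_
    exact congrFun this f.toContinuousMap
  have he := hc.isClosedEmbedding hi
  refine ⟨?_⟩
  rw [borel, MeasurableSpace.generateFrom_le_iff]
  intro s hs
  obtain ⟨t, ht, rfl⟩ := he.isInducing.isOpen_iff.1 hs
  exact hm ht.measurableSet

end W
end helpers

section helpersB
open Filter Topology ProbabilityTheory

theorem meas_bind2 {Z Y V : Type*} [MeasurableSpace Z] [MeasurableSpace Y] [MeasurableSpace V]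
    (κ : Z → Measure Y) [hκp : ∀ z, IsProbabilityMeasure (κ z)] (hκ : Measurable κ)
    (η : Z → Y → Measure V) (hη : Measurable fun z : Z × Y => η z.1 z.2) :
    Measurable fun z => (κ z).bind (η z) := by
  refine Measure.measurable_of_measurable_coe _ fun s hs => ?_
  have h1 : ∀ z, (κ z).bind (η z) s = ∫⁻ y, η z y s ∂(κ z) := fun z =>
    Measure.bind_apply hs (hη.comp measurable_prodMk_left).aemeasurable
  simp_rw [h1]
  let k : Kernel Z Y := ⟨κ, hκ⟩
  have : IsMarkovKernel k := ⟨fun z => hκp z⟩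
  exact Measurable.lintegral_kernel_prod_right (κ := k) (f := fun z y => η z y s)
    ((Measure.measurable_coe hs).comp hη)

theorem meas_map2 {Z Y V : Type*} [MeasurableSpace Z] [MeasurableSpace Y] [MeasurableSpace V]
    (κ : Z → Measure Y) [hκp : ∀ z, IsProbabilityMeasure (κ z)] (hκ : Measurable κ)
    (G : Z → Y → V) (hG : Measurable fun z : Z × Y => G z.1 z.2) :
    Measurable fun z => (κ z).map (G z) := by
  have h : ∀ z, (κ z).map (G z) = (κ z).bind (fun y => Measure.dirac (G z y)) := fun z =>
    (Measure.bind_dirac_eq_map _ (hG.comp measurable_prodMk_left)).symm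
  simp_rw [h]
  exact meas_bind2 κ hκ _ (Measure.measurable_dirac.comp hG)

theorem int_bind_kernel {Y V : Type*} [MeasurableSpace Y] [MeasurableSpace V]
    (m : Measure Y) [IsProbabilityMeasure m] (k : Kernel Y V) [IsMarkovKernel k]
    (g : V → ℝ) (hg : Measurable g) (C : ℝ) (hC : ∀ v, |g v| ≤ C) :
    ∫ v, g v ∂(m.bind k) = ∫ y, ∫ v, g v ∂(k y) ∂m := by
  rw [← Measure.snd_compProd, Measure.snd,
    integral_map measurable_snd.aemeasurable hg.aestronglyMeasurable, Measure.integral_compProd]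
  exact Integrable.of_bound (hg.comp measurable_snd).aestronglyMeasurable C
    (Eventually.of_forall fun v => hC v.2)

theorem int_bind {Y V : Type*} [MeasurableSpace Y] [MeasurableSpace V]
    (m : Measure Y) [IsProbabilityMeasure m] (η : Y → Measure V)
    [hηp : ∀ z, IsProbabilityMeasure (η z)] (hη : Measurable η) (g : V → ℝ) (hg : Measurable g)
    (C : ℝ) (hC : ∀ v, |g v| ≤ C) :
    ∫ v, g v ∂(m.bind η) = ∫ y, ∫ v, g v ∂(η y) ∂m :=
  have : IsMarkovKernel (⟨η, hη⟩ : Kernel Y V) := ⟨fun z => hηp z⟩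
  int_bind_kernel m ⟨η, hη⟩ g hg C hC

theorem prob_bind {Y V : Type*} [MeasurableSpace Y] [MeasurableSpace V]
    (m : Measure Y) [IsProbabilityMeasure m] (η : Y → Measure V)
    [hηp : ∀ z, IsProbabilityMeasure (η z)] (hη : Measurable η) :
    IsProbabilityMeasure (m.bind η) := by
  let k : Kernel Y V := ⟨η, hη⟩
  have : IsMarkovKernel k := ⟨fun z => hηp z⟩
  exact (inferInstance : IsProbabilityMeasure (m.bind k))

section W
variable {X : Type*} [MetricSpace X] [CompactSpace X] [MeasurableSpace X] [BorelSpace X]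

theorem W1_cont (μ : ProbabilityMeasure X) : Continuous fun ν => W1 ν μ := by
  rw [continuous_iff_continuousAt]
  intro ν
  rw [ContinuousAt, tendsto_iff_dist_tendsto_zero]
  refine squeeze_zero (fun _ => dist_nonneg) (fun κ => ?_) (W1_tendsto ν)
  rw [Real.dist_eq, abs_le]
  have h1 := W1_triangle κ ν μ
  have h2 := W1_triangle ν κ μ
  rw [W1_comm ν κ] at h2
  constructor <;> linarith

theorem int_emp [Nonempty X] {N : ℕ} (hN : N ≠ 0) (x : Fin N → X) {f : X → ℝ}
    (hf : Continuous f) :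
    ∫ z, f z ∂(emp N x : Measure X) = (N : ℝ)⁻¹ * ∑ i, f (x i) := by
  have h : (emp N x : Measure X) = (N : ENNReal)⁻¹ • ∑ i : Fin N, Measure.dirac (x i) := by
    simp [emp, hN]
  rw [h, integral_smul_measure, integral_finsetSum_measure fun i _ => cont_integrable _ hf]
  simp

theorem emp_cont [Nonempty X] {N : ℕ} (hN : N ≠ 0) :
    Continuous (emp N : (Fin N → X) → ProbabilityMeasure X) := by
  refine cont_of_lip _ fun f hf => ?_
  simp_rw [int_emp hN _ hf.continuous]
  have := hf.continuous
  fun_prop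

theorem var_bound {N : ℕ} (hN : N ≠ 0) (q : Fin N → ProbabilityMeasure X) (f : X → ℝ)
    (hf : LipschitzWith 1 f) :
    ∫ y, ((N : ℝ)⁻¹ * ∑ i, f (y i) - (N : ℝ)⁻¹ * ∑ i, ∫ z, f z ∂(q i : Measure X)) ^ 2
      ∂(Measure.pi fun i => (q i : Measure X)) ≤ Metric.diam (Set.univ : Set X) ^ 2 / N := by
  set D := Metric.diam (Set.univ : Set X)
  have hNpos : (0 : ℝ) < N := by positivity
  have hL : ∀ i, MemLp f 2 (q i : Measure X) := fun i => by
    obtain ⟨C, hC⟩ := isCompact_univ.exists_bound_of_continuousOn hf.continuous.continuousOn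
    exact MemLp.of_bound hf.continuous.aestronglyMeasurable C
      (Eventually.of_forall fun x => hC x trivial)
  have hv := variance_sum_pi (μ := fun i => (q i : Measure X)) (X := fun _ => f) hL
  have hv2 : ∀ i, Var[f; (q i : Measure X)] ≤ D ^ 2 := fun i => by
    obtain ⟨a⟩ : Nonempty X := (q i).nonempty
    have := variance_le_sq_of_bounded (μ := (q i : Measure X)) (X := f) (a := f a - D)
      (b := f a + D) (Eventually.of_forall fun x => by
        have h1 := ((lip1_iff f).1 hf x a).trans
          (Metric.dist_le_diam_of_mem isCompact_univ.isBounded trivial trivial)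
        rw [abs_le] at h1
        exact ⟨by linarith [h1.1], by linarith [h1.2]⟩) hf.continuous.aemeasurable
    refine this.trans (le_of_eq ?_)
    ring
  have hfi : Continuous (∑ i : Fin N, fun y : Fin N → X => f (y i)) := by
    have h0 : Continuous fun y : Fin N → X => ∑ i : Fin N, f (y i) :=
      continuous_finsetSum _ fun i _ => hf.continuous.comp (continuous_apply i)
    refine h0.congr fun y => ?_
    simp
  rw [variance_eq_integral hfi.aemeasurable] at hv
  have hE : ∫ y, (∑ i : Fin N, fun y : Fin N → X => f (y i)) y
      ∂(Measure.pi fun i => (q i : Measure X)) = ∑ i, ∫ z, f z ∂(q i : Measure X) := by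
    simp_rw [Finset.sum_apply]
    rw [integral_finsetSum]
    · refine Finset.sum_congr rfl fun i _ => ?_
      exact integral_comp_eval (μ := fun i => (q i : Measure X)) hf.continuous.aestronglyMeasurable
    · intro i _
      exact cont_integrable _ (hf.continuous.comp (continuous_apply i))
  rw [hE] at hv
  have h3 : ∫ y, ((N : ℝ)⁻¹ * ∑ i, f (y i) - (N : ℝ)⁻¹ * ∑ i, ∫ z, f z ∂(q i : Measure X)) ^ 2
      ∂(Measure.pi fun i => (q i : Measure X)) =
      ((N : ℝ)⁻¹) ^ 2 * ∑ i, Var[f; (q i : Measure X)] := by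
    rw [← hv, ← integral_const_mul]
    congr 1; ext y
    simp only [Finset.sum_apply]
    ring
  rw [h3]
  have h4 : ∑ i, Var[f; (q i : Measure X)] ≤ N * D ^ 2 := by
    refine (Finset.sum_le_sum fun i _ => hv2 i).trans ?_
    simp
  calc ((N : ℝ)⁻¹) ^ 2 * ∑ i, Var[f; (q i : Measure X)] ≤ ((N : ℝ)⁻¹) ^ 2 * (N * D ^ 2) := by
        gcongr
    _ = D ^ 2 / N := by field_simp

theorem lln [Nonempty X] (ε : ℝ) (hε : 0 < ε) : ∃ N0 : ℕ, N0 ≠ 0 ∧ ∀ N ≥ N0,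
    ∀ (q : Fin N → ProbabilityMeasure X) (ν : ProbabilityMeasure X),
    (∀ f : X → ℝ, LipschitzWith 1 f → ∫ z, f z ∂(ν : Measure X) =
      (N : ℝ)⁻¹ * ∑ i, ∫ z, f z ∂(q i : Measure X)) →
    ∫ y, W1 (emp N y) ν ∂(Measure.pi fun i => (q i : Measure X)) ≤ ε := by
  obtain ⟨F, hF, hW⟩ := W1_net (X := X) (ε / 2) (by positivity)
  set D := Metric.diam (Set.univ : Set X)
  set m : ℝ := (F.card : ℝ) with hm
  have hm0 : 0 ≤ m := by positivity
  set η : ℝ := ε / (4 * (m + 1)) with hη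
  have hηpos : 0 < η := by positivity
  obtain ⟨N0, hN0⟩ := exists_nat_ge (4 * m * D ^ 2 / (η * ε))
  refine ⟨N0 + 1, by omega, fun N hN q ν hν => ?_⟩
  have hNne : N ≠ 0 := by omega
  have hNpos : (0 : ℝ) < N := by positivity
  have hNge : 4 * m * D ^ 2 / (η * ε) ≤ N := hN0.trans (by exact_mod_cast (by omega : N0 ≤ N))
  set P := Measure.pi fun i => (q i : Measure X)
  let Z : BoundedContinuousFunction X ℝ → (Fin N → X) → ℝ := fun f y =>
    (N : ℝ)⁻¹ * ∑ i, f (y i) - (N : ℝ)⁻¹ * ∑ i, ∫ z, f z ∂(q i : Measure X)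
  have hZc : ∀ f, Continuous (Z f) := fun f => by
    have := f.continuous
    fun_prop
  have hpt : ∀ y, W1 (emp N y) ν ≤ ε / 2 + ∑ f ∈ F, (η + η⁻¹ * Z f y ^ 2) := by
    intro y
    refine (hW _ _).trans ?_
    gcongr with f hf
    rw [int_emp hNne _ f.continuous, hν f (hF f hf)]
    change |Z f y| ≤ _
    have : |Z f y| * η ≤ η * η + Z f y ^ 2 := by
      rw [← sq_abs (Z f y)]; nlinarith [sq_nonneg (|Z f y| - η), abs_nonneg (Z f y)]
    rw [← sub_nonneg]
    have h5 : η + η⁻¹ * Z f y ^ 2 - |Z f y| = η⁻¹ * (η * η + Z f y ^ 2 - |Z f y| * η) := by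
      field_simp
    rw [h5]
    exact mul_nonneg (by positivity) (by linarith)
  have hI : ∫ y, W1 (emp N y) ν ∂P ≤ ∫ y, (ε / 2 + ∑ f ∈ F, (η + η⁻¹ * Z f y ^ 2)) ∂P := by
    refine integral_mono (cont_integrable _ ((W1_cont ν).comp (emp_cont hNne)))
      (cont_integrable _ ?_) hpt
    fun_prop
  refine hI.trans ?_
  have hi1 : ∀ f, Integrable (fun y => η + η⁻¹ * Z f y ^ 2) P := fun f =>
    cont_integrable _ (by fun_prop)
  rw [integral_add (integrable_const _) (integrable_finsetSum _ fun f _ => hi1 f),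
    integral_finsetSum _ fun f _ => hi1 f]
  have hone : ∀ f ∈ F, ∫ y, (η + η⁻¹ * Z f y ^ 2) ∂P ≤ η + η⁻¹ * (D ^ 2 / N) := by
    intro f hf
    rw [integral_add (integrable_const _) (cont_integrable _ (by fun_prop)), integral_const_mul]
    simp only [integral_const, probReal_univ, one_smul]
    have := var_bound hNne q f (hF f hf)
    gcongr
  have hs := Finset.sum_le_sum hone
  rw [Finset.sum_const, nsmul_eq_mul, ← hm] at hs
  simp only [integral_const, probReal_univ, one_smul]
  have e1 : m * η ≤ ε / 4 := by
    rw [hη, mul_div_assoc', div_le_div_iff₀ (by positivity) (by positivity)]; nlinarith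
  have e2 : m * (η⁻¹ * (D ^ 2 / N)) ≤ ε / 4 := by
    rw [div_le_iff₀ (by positivity)] at hNge
    have : m * (η⁻¹ * (D ^ 2 / N)) = (m * D ^ 2) / (η * N) := by field_simp
    rw [this, div_le_div_iff₀ (by positivity) (by positivity)]
    nlinarith
  linarith

end W
end helpersB

section helpersC
open Filter Topology ProbabilityTheory

theorem cont_of_bound {Z : Type*} [TopologicalSpace Z] (h : Z → ℝ) (b : Z → Z → ℝ)
    (hb : ∀ z z', |h z - h z'| ≤ b z z') (hc : ∀ z', Continuous fun z => b z z')
    (h0 : ∀ z, b z z = 0) : Continuous h := by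
  rw [continuous_iff_continuousAt]
  intro z
  rw [ContinuousAt, tendsto_iff_dist_tendsto_zero]
  refine squeeze_zero (fun _ => dist_nonneg) (fun w => hb w z) ?_
  simpa [h0 z] using (hc z).tendsto z

theorem abs_int_le {Y : Type*} [MeasurableSpace Y] (m : Measure Y) [IsProbabilityMeasure m]
    (f : Y → ℝ) (c : ℝ) (h : ∀ y, |f y| ≤ c) : |∫ y, f y ∂m| ≤ c := by
  have := norm_integral_le_of_norm_le_const (μ := m) (f := f) (C := c) (Eventually.of_forall h)
  simpa using this

theorem abs_int_sub_le {Y : Type*} [MeasurableSpace Y] (m : Measure Y) [IsProbabilityMeasure m]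
    (f g : Y → ℝ) (hf : Integrable f m) (hg : Integrable g m) (c : ℝ)
    (h : ∀ y, |f y - g y| ≤ c) : |∫ y, f y ∂m - ∫ y, g y ∂m| ≤ c := by
  rw [← integral_sub hf hg]
  exact abs_int_le m _ c h

theorem cont_bdd {Z : Type*} [TopologicalSpace Z] [CompactSpace Z] {g : Z → ℝ}
    (hg : Continuous g) : ∃ C, ∀ z, |g z| ≤ C := by
  obtain ⟨C, hC⟩ := isCompact_univ.exists_bound_of_continuousOn hg.continuousOn
  exact ⟨C, fun z => hC z trivial⟩

instance secondPM {X : Type*} [MetricSpace X] [CompactSpace X] [MeasurableSpace X] [BorelSpace X] :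
    SecondCountableTopology (ProbabilityMeasure X) := by
  letI := TopologicalSpace.metrizableSpaceMetric (ProbabilityMeasure X)
  infer_instance

/-- the sum distance on the state space of the limiting process -/
noncomputable def dS {X X0 U0 Xi : Type*} [MetricSpace X] [MeasurableSpace X] [MetricSpace X0]
    [MetricSpace U0] [MetricSpace Xi] (s s' : X0 × (U0 × Xi) × ProbabilityMeasure X) : ℝ :=
  dist s.1 s'.1 + dist s.2.1.1 s'.2.1.1 + dist s.2.1.2 s'.2.1.2 + W1 s.2.2 s'.2.2

section main
variable {X U X0 U0 Xi : Type*}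
    [MetricSpace X] [CompactSpace X] [MeasurableSpace X] [BorelSpace X]
    [MetricSpace U] [CompactSpace U] [MeasurableSpace U] [BorelSpace U]
    [MetricSpace X0] [CompactSpace X0] [MeasurableSpace X0] [BorelSpace X0]
    [MetricSpace U0] [CompactSpace U0] [MeasurableSpace U0] [BorelSpace U0]
    [MetricSpace Xi] [CompactSpace Xi] [MeasurableSpace Xi] [BorelSpace Xi]

theorem dS_cont (s' : X0 × (U0 × Xi) × ProbabilityMeasure X) : Continuous fun s => dS s s' := by
  have h := (W1_cont s'.2.2).comp
    (continuous_snd.snd : Continuous fun s : X0 × (U0 × Xi) × ProbabilityMeasure X => s.2.2)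
  unfold dS
  simp only [Function.comp_def] at h
  fun_prop

theorem dS_self (s : X0 × (U0 × Xi) × ProbabilityMeasure X) : dS s s = 0 := by
  simp [dS, W1_self]

theorem dS_nonneg (s s' : X0 × (U0 × Xi) × ProbabilityMeasure X) : 0 ≤ dS s s' := by
  have := W1_nonneg s.2.2 s'.2.2
  unfold dS; positivity

theorem gcont {L : ℝ} {g : X0 × (U0 × Xi) × ProbabilityMeasure X → ℝ}
    (hg : ∀ s s', |g s - g s'| ≤ L * dS s s') : Continuous g :=
  cont_of_bound g (fun s s' => L * dS s s') hg (fun s' => (dS_cont s').const_mul L)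
    (fun s => by simp [dS_self])

/-! ### the mean-field transition -/

section transition
variable (p : X → U → X0 → U0 → ProbabilityMeasure X → ProbabilityMeasure X)
    (Γ : Xi → X → ProbabilityMeasure U) (Lp LPi LΓ : ℝ) (hLp0 : 0 ≤ Lp) (hLPi0 : 0 ≤ LPi)
    (hLΓ0 : 0 ≤ LΓ)
    (hp : ∀ (x x' : X) (u u' : U) (x0 x0' : X0) (u0 u0' : U0)
        (μ μ' : ProbabilityMeasure X) (f : X → ℝ), LipschitzWith 1 f →
      |∫ y, f y ∂(p x u x0 u0 μ : Measure X) - ∫ y, f y ∂(p x' u' x0' u0' μ' : Measure X)|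
        ≤ Lp * (dist x x' + dist u u' + dist x0 x0' + dist u0 u0' + W1 μ μ'))
    (hΓrule : ∀ (ξ : Xi) (x x' : X) (g : U → ℝ), LipschitzWith 1 g →
      |∫ u, g u ∂(Γ ξ x : Measure U) - ∫ u, g u ∂(Γ ξ x' : Measure U)| ≤ LPi * dist x x')
    (hΓ : ∀ (ξ ξ' : Xi) (x : X) (g : U → ℝ), LipschitzWith 1 g →
      |∫ u, g u ∂(Γ ξ x : Measure U) - ∫ u, g u ∂(Γ ξ' x : Measure U)| ≤ LΓ * dist ξ ξ')
include hLp0 hLPi0 hLΓ0 hp hΓrule hΓ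

omit hLp0 hLPi0 hLΓ0 hΓrule hΓ [CompactSpace X0] [CompactSpace U0] in
theorem p_meas (x : X) (x0 : X0) (u0 : U0) (μ : ProbabilityMeasure X) :
    Measurable fun u => (p x u x0 u0 μ : Measure X) := by
  refine meas_coe _ (cont_of_lip _ fun f hf => ?_)
  refine cont_of_bound _ (fun u u' => Lp * dist u u') (fun u u' => ?_) (fun u' => by fun_prop)
    (by simp)
  simpa [W1_self] using hp x x u u' x0 x0 u0 u0 μ μ f hf

omit hLp0 hLPi0 hLΓ0 hΓrule hΓ [CompactSpace X0] [CompactSpace U0] in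
theorem q_exists : ∃ q : X0 → U0 → Xi → ProbabilityMeasure X → X → ProbabilityMeasure X,
    ∀ x0 u0 ξ μ x, (q x0 u0 ξ μ x : Measure X) =
      (Γ ξ x : Measure U).bind fun u => (p x u x0 u0 μ : Measure X) :=
  ⟨fun x0 u0 ξ μ x => ⟨(Γ ξ x : Measure U).bind fun u => (p x u x0 u0 μ : Measure X),
    prob_bind _ _ (p_meas p Lp hp x x0 u0 μ)⟩, fun _ _ _ _ _ => rfl⟩

variable (q : X0 → U0 → Xi → ProbabilityMeasure X → X → ProbabilityMeasure X)
    (hq : ∀ x0 u0 ξ μ x, (q x0 u0 ξ μ x : Measure X) =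
      (Γ ξ x : Measure U).bind fun u => (p x u x0 u0 μ : Measure X))
include hq

theorem q_lip (x0 x0' : X0) (u0 u0' : U0) (ξ ξ' : Xi) (μ μ' : ProbabilityMeasure X) (x x' : X)
    (f : X → ℝ) (hf : LipschitzWith 1 f) :
    |∫ y, f y ∂(q x0 u0 ξ μ x : Measure X) - ∫ y, f y ∂(q x0' u0' ξ' μ' x' : Measure X)| ≤
      Lp * (1 + LPi + LΓ) * (dist x x' + dist x0 x0' + dist u0 u0' + dist ξ ξ' + W1 μ μ') := by
  obtain ⟨C, hC⟩ := cont_bdd hf.continuous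
  have hI : ∀ x0 u0 ξ μ x, ∫ y, f y ∂(q x0 u0 ξ μ x : Measure X) =
      ∫ u, ∫ y, f y ∂(p x u x0 u0 μ : Measure X) ∂(Γ ξ x : Measure U) := fun x0 u0 ξ μ x => by
    rw [hq, int_bind _ _ (p_meas p Lp hp x x0 u0 μ) f hf.continuous.measurable C hC]
  rw [hI, hI]
  have hlip : ∀ x0 u0 μ x (u u' : U), |∫ y, f y ∂(p x u x0 u0 μ : Measure X)
      - ∫ y, f y ∂(p x u' x0 u0 μ : Measure X)| ≤ Lp * dist u u' := fun x0 u0 μ x u u' => by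
    simpa [W1_self] using hp x x u u' x0 x0 u0 u0 μ μ f hf
  have hintg : ∀ x0 u0 μ x (m : ProbabilityMeasure U),
      Integrable (fun u => ∫ y, f y ∂(p x u x0 u0 μ : Measure X)) (m : Measure U) :=
    fun x0 u0 μ x m => cont_integrable _ (lip_cont hLp0 (hlip x0 u0 μ x))
  have h1 := abs_int_sub_le (Γ ξ x : Measure U) _ _ (hintg x0 u0 μ x (Γ ξ x))
    (hintg x0' u0' μ' x' (Γ ξ x))
    (Lp * (dist x x' + dist x0 x0' + dist u0 u0' + W1 μ μ')) (fun u => by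
      simpa using hp x x' u u x0 x0' u0 u0' μ μ' f hf)
  have h2 := scale_le (Γ ξ x : Measure U) (Γ ξ x' : Measure U) dist _
    (fun g hg => hΓrule ξ x x' g ((lip1_iff g).2 hg)) Lp hLp0 _ (hlip x0' u0' μ' x')
  have h3 := scale_le (Γ ξ x' : Measure U) (Γ ξ' x' : Measure U) dist _
    (fun g hg => hΓ ξ ξ' x' g ((lip1_iff g).2 hg)) Lp hLp0 _ (hlip x0' u0' μ' x')
  have hW := W1_nonneg μ μ'
  have a1 := dist_nonneg (x := x) (y := x')
  have a2 := dist_nonneg (x := x0) (y := x0')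
  have a3 := dist_nonneg (x := u0) (y := u0')
  have a4 := dist_nonneg (x := ξ) (y := ξ')
  have b1 : 0 ≤ Lp * LPi * (dist x0 x0' + dist u0 u0' + dist ξ ξ' + W1 μ μ') := by positivity
  have b2 : 0 ≤ Lp * LΓ * (dist x x' + dist x0 x0' + dist u0 u0' + W1 μ μ') := by positivity
  have b3 : 0 ≤ Lp * dist ξ ξ' := by positivity
  rw [abs_le] at *
  constructor <;> nlinarith [h1.1, h1.2, h2.1, h2.2, h3.1, h3.2]

theorem q_cont : Continuous fun z : X0 × U0 × Xi × ProbabilityMeasure X × X =>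
    q z.1 z.2.1 z.2.2.1 z.2.2.2.1 z.2.2.2.2 := by
  refine cont_of_lip _ fun f hf => ?_
  refine cont_of_bound _ (fun z z' => Lp * (1 + LPi + LΓ) * (dist z.2.2.2.2 z'.2.2.2.2
    + dist z.1 z'.1 + dist z.2.1 z'.2.1 + dist z.2.2.1 z'.2.2.1 + W1 z.2.2.2.1 z'.2.2.2.1))
    (fun z z' => ?_) (fun z' => ?_) (fun z => by simp [W1_self])
  · exact q_lip p Γ Lp LPi LΓ hLp0 hLPi0 hLΓ0 hp hΓrule hΓ q hq _ _ _ _ _ _ _ _ _ _ f hf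
  · have h := (W1_cont z'.2.2.2.1).comp
      (by fun_prop : Continuous fun z : X0 × U0 × Xi × ProbabilityMeasure X × X => z.2.2.2.1)
    simp only [Function.comp_def] at h
    fun_prop

variable (TG : X0 → U0 → Xi → ProbabilityMeasure X → ProbabilityMeasure X)
    (hTG : ∀ (x0 : X0) (u0 : U0) (ξ : Xi) (μ : ProbabilityMeasure X),
      (TG x0 u0 ξ μ : Measure X) = (μ : Measure X).bind fun x =>
        ((Γ ξ x : Measure U)).bind fun u => (p x u x0 u0 μ : Measure X))
include hTG

theorem T_int (x0 : X0) (u0 : U0) (ξ : Xi) (μ : ProbabilityMeasure X)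
    (f : X → ℝ) (hf : LipschitzWith 1 f) :
    ∫ y, f y ∂(TG x0 u0 ξ μ : Measure X)
      = ∫ x, ∫ y, f y ∂(q x0 u0 ξ μ x : Measure X) ∂(μ : Measure X) := by
  obtain ⟨C, hC⟩ := cont_bdd hf.continuous
  have hc : Continuous fun x => q x0 u0 ξ μ x :=
    (q_cont p Γ Lp LPi LΓ hLp0 hLPi0 hLΓ0 hp hΓrule hΓ q hq).comp
      (by fun_prop : Continuous fun x : X => (x0, u0, ξ, μ, x))
  rw [hTG]
  simp_rw [← hq]
  rw [int_bind _ _ (meas_coe _ hc) f hf.continuous.measurable C hC]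

theorem T_lip (x0 x0' : X0) (u0 u0' : U0) (ξ ξ' : Xi) (μ μ' : ProbabilityMeasure X) :
    W1 (TG x0 u0 ξ μ) (TG x0' u0' ξ' μ') ≤
      2 * (Lp * (1 + LPi + LΓ)) * (dist x0 x0' + dist u0 u0' + dist ξ ξ' + W1 μ μ') := by
  refine W1_le _ _ _ fun f hf => ?_
  have ti := T_int p Γ Lp LPi LΓ hLp0 hLPi0 hLΓ0 hp hΓrule hΓ q hq TG hTG
  have ql := q_lip p Γ Lp LPi LΓ hLp0 hLPi0 hLΓ0 hp hΓrule hΓ q hq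
  set K := Lp * (1 + LPi + LΓ) with hK
  have hK0 : 0 ≤ K := by positivity
  have hlip : ∀ x0 u0 ξ μ (x x' : X), |∫ y, f y ∂(q x0 u0 ξ μ x : Measure X)
      - ∫ y, f y ∂(q x0 u0 ξ μ x' : Measure X)| ≤ K * dist x x' := fun x0 u0 ξ μ x x' => by
    simpa [W1_self] using ql x0 x0 u0 u0 ξ ξ μ μ x x' f hf
  have hintg : ∀ x0 u0 ξ μ (m : ProbabilityMeasure X),
      Integrable (fun x => ∫ y, f y ∂(q x0 u0 ξ μ x : Measure X)) (m : Measure X) :=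
    fun x0 u0 ξ μ m => cont_integrable _ (lip_cont hK0 (hlip x0 u0 ξ μ))
  rw [ti _ _ _ _ f hf, ti _ _ _ _ f hf]
  have h1 := abs_int_sub_le (μ : Measure X) _ _ (hintg x0 u0 ξ μ μ) (hintg x0' u0' ξ' μ' μ)
    (K * (dist x0 x0' + dist u0 u0' + dist ξ ξ' + W1 μ μ')) (fun x => by
      simpa using ql x0 x0' u0 u0' ξ ξ' μ μ' x x f hf)
  have h2 := le_W1 μ μ' K hK0 _ (hlip x0' u0' ξ' μ')
  have b1 : 0 ≤ K * (dist x0 x0' + dist u0 u0' + dist ξ ξ') := by positivity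
  rw [abs_le] at *
  constructor <;> nlinarith [h1.1, h1.2, h2.1, h2.2]

theorem T_emp [Nonempty X] {N : ℕ} (hN : N ≠ 0) (x0 : X0) (u0 : U0) (ξ : Xi) (x : Fin N → X)
    (f : X → ℝ) (hf : LipschitzWith 1 f) :
    ∫ y, f y ∂(TG x0 u0 ξ (emp N x) : Measure X)
      = (N : ℝ)⁻¹ * ∑ i, ∫ y, f y ∂(q x0 u0 ξ (emp N x) (x i) : Measure X) := by
  rw [T_int p Γ Lp LPi LΓ hLp0 hLPi0 hLΓ0 hp hΓrule hΓ q hq TG hTG _ _ _ _ f hf]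
  have ql := q_lip p Γ Lp LPi LΓ hLp0 hLPi0 hLΓ0 hp hΓrule hΓ q hq
  refine int_emp hN x (f := fun x' => ∫ y, f y ∂(q x0 u0 ξ (emp N x) x' : Measure X)) ?_
  refine lip_cont (L := Lp * (1 + LPi + LΓ)) (by positivity) fun a b => ?_
  simpa [W1_self] using ql x0 x0 u0 u0 ξ ξ (emp N x) (emp N x) a b f hf

end transition
end main
end helpersC

section helpersD
open Filter Topology ProbabilityTheory

variable {X X0 U0 Xi : Type*}
    [MetricSpace X] [CompactSpace X] [MeasurableSpace X] [BorelSpace X]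
    [MetricSpace X0] [CompactSpace X0] [MeasurableSpace X0] [BorelSpace X0]
    [MetricSpace U0] [CompactSpace U0] [MeasurableSpace U0] [BorelSpace U0]
    [MetricSpace Xi] [CompactSpace Xi] [MeasurableSpace Xi] [BorelSpace Xi]

/-- averaging over the joint action -/
noncomputable def Aop (π : X0 → ProbabilityMeasure X → ProbabilityMeasure (U0 × Xi))
    (g : X0 × (U0 × Xi) × ProbabilityMeasure X → ℝ) (z : X0 × ProbabilityMeasure X) : ℝ :=
  ∫ a, g (z.1, a, z.2) ∂(π z.1 z.2 : Measure (U0 × Xi))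

/-- one-step operator of the limiting process -/
noncomputable def Pop (p0 : X0 → U0 → ProbabilityMeasure X → ProbabilityMeasure X0)
    (π : X0 → ProbabilityMeasure X → ProbabilityMeasure (U0 × Xi))
    (TG : X0 → U0 → Xi → ProbabilityMeasure X → ProbabilityMeasure X)
    (g : X0 × (U0 × Xi) × ProbabilityMeasure X → ℝ)
    (s : X0 × (U0 × Xi) × ProbabilityMeasure X) : ℝ :=
  ∫ y0, Aop π g (y0, TG s.1 s.2.1.1 s.2.1.2 s.2.2) ∂(p0 s.1 s.2.1.1 s.2.2 : Measure X0)

section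
variable (p0 : X0 → U0 → ProbabilityMeasure X → ProbabilityMeasure X0)
    (π : X0 → ProbabilityMeasure X → ProbabilityMeasure (U0 × Xi))
    (TG : X0 → U0 → Xi → ProbabilityMeasure X → ProbabilityMeasure X)
    (Lp0 Lpi LT : ℝ) (hLp0 : 0 ≤ Lp0) (hLpi : 0 ≤ Lpi) (hLT : 0 ≤ LT)
    (hp0 : ∀ (x0 x0' : X0) (u0 u0' : U0) (μ μ' : ProbabilityMeasure X) (f : X0 → ℝ),
        LipschitzWith 1 f →
      |∫ y, f y ∂(p0 x0 u0 μ : Measure X0) - ∫ y, f y ∂(p0 x0' u0' μ' : Measure X0)|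
        ≤ Lp0 * (dist x0 x0' + dist u0 u0' + W1 μ μ'))
    (hπ : ∀ (x0 x0' : X0) (μ μ' : ProbabilityMeasure X) (g : U0 × Xi → ℝ),
      (∀ a b : U0 × Xi, |g a - g b| ≤ dist a.1 b.1 + dist a.2 b.2) →
      |∫ a, g a ∂(π x0 μ : Measure (U0 × Xi)) - ∫ a, g a ∂(π x0' μ' : Measure (U0 × Xi))|
        ≤ Lpi * (dist x0 x0' + W1 μ μ'))
    (hT : ∀ (x0 x0' : X0) (u0 u0' : U0) (ξ ξ' : Xi) (μ μ' : ProbabilityMeasure X),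
      W1 (TG x0 u0 ξ μ) (TG x0' u0' ξ' μ')
        ≤ LT * (dist x0 x0' + dist u0 u0' + dist ξ ξ' + W1 μ μ'))

include hp0 in
theorem p0_cont : Continuous fun z : X0 × U0 × ProbabilityMeasure X => p0 z.1 z.2.1 z.2.2 := by
  refine cont_of_lip _ fun f hf => ?_
  refine cont_of_bound _ (fun z z' => Lp0 * (dist z.1 z'.1 + dist z.2.1 z'.2.1
    + W1 z.2.2 z'.2.2)) (fun z z' => hp0 _ _ _ _ _ _ f hf) (fun z' => ?_)
    (fun z => by simp [W1_self])
  have h := (W1_cont z'.2.2).comp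
    (by fun_prop : Continuous fun z : X0 × U0 × ProbabilityMeasure X => z.2.2)
  simp only [Function.comp_def] at h
  fun_prop

include hπ in
theorem pi_cont : Continuous fun z : X0 × ProbabilityMeasure X => π z.1 z.2 := by
  refine cont_of_lip _ fun f hf => ?_
  refine cont_of_bound _ (fun z z' => Lpi * (dist z.1 z'.1 + W1 z.2 z'.2))
    (fun z z' => hπ _ _ _ _ f fun a b => ?_) (fun z' => ?_) (fun z => by simp [W1_self])
  · refine ((lip1_iff f).1 hf a b).trans ?_
    rw [Prod.dist_eq]
    exact max_le_add_of_nonneg dist_nonneg dist_nonneg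
  · have h := (W1_cont z'.2).comp
      (by fun_prop : Continuous fun z : X0 × ProbabilityMeasure X => z.2)
    simp only [Function.comp_def] at h
    fun_prop

include hT in
theorem T_cont : Continuous fun s : X0 × (U0 × Xi) × ProbabilityMeasure X =>
    TG s.1 s.2.1.1 s.2.1.2 s.2.2 := by
  refine cont_of_lip _ fun f hf => ?_
  refine cont_of_bound _ (fun s s' => LT * dS s s') (fun s s' => ?_)
    (fun s' => (dS_cont s').const_mul LT) (fun s => by simp [dS_self])
  have := le_W1 (TG s.1 s.2.1.1 s.2.1.2 s.2.2) (TG s'.1 s'.2.1.1 s'.2.1.2 s'.2.2) 1 zero_le_one f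
    (by simpa using (lip1_iff f).1 hf)
  rw [one_mul] at this
  exact this.trans (hT _ _ _ _ _ _ _ _)

variable (L : ℝ) (hL : 0 ≤ L) (g : X0 × (U0 × Xi) × ProbabilityMeasure X → ℝ)
    (hg : ∀ s s', |g s - g s'| ≤ L * dS s s')

include hπ hLpi hL hg in
theorem A_lip (z z' : X0 × ProbabilityMeasure X) :
    |Aop π g z - Aop π g z'| ≤ L * (1 + Lpi) * (dist z.1 z'.1 + W1 z.2 z'.2) := by
  have hgc := gcont hg
  have hi : ∀ (z : X0 × ProbabilityMeasure X) (m : ProbabilityMeasure (U0 × Xi)),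
      Integrable (fun a => g (z.1, a, z.2)) (m : Measure (U0 × Xi)) := fun z m =>
    cont_integrable _ (by fun_prop)
  have h1 := abs_int_sub_le (π z.1 z.2 : Measure (U0 × Xi)) _ _ (hi z _) (hi z' _)
    (L * (dist z.1 z'.1 + W1 z.2 z'.2)) (fun a => by
      simpa [dS] using hg (z.1, a, z.2) (z'.1, a, z'.2))
  have h2 := scale_le (π z.1 z.2 : Measure (U0 × Xi)) (π z'.1 z'.2 : Measure (U0 × Xi))
    (fun a b => dist a.1 b.1 + dist a.2 b.2) _ (fun f hf => hπ z.1 z'.1 z.2 z'.2 f hf) L hL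
    (fun a => g (z'.1, a, z'.2)) (fun a b => by
      simpa [dS, W1_self] using hg (z'.1, a, z'.2) (z'.1, b, z'.2))
  unfold Aop
  rw [abs_le] at *
  constructor <;> nlinarith [h1.1, h1.2, h2.1, h2.2]

include hπ hLpi hL hg in
theorem A_cont : Continuous (Aop π g) := by
  refine cont_of_bound _ (fun z z' => L * (1 + Lpi) * (dist z.1 z'.1 + W1 z.2 z'.2))
    (A_lip π Lpi hLpi hπ L hL g hg) (fun z' => ?_) (fun z => by simp [W1_self])
  have h := (W1_cont z'.2).comp
    (by fun_prop : Continuous fun z : X0 × ProbabilityMeasure X => z.2)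
  simp only [Function.comp_def] at h
  fun_prop

include hπ hLpi hL hg hLp0 hLT hp0 hT in
theorem P_lip (s s' : X0 × (U0 × Xi) × ProbabilityMeasure X) :
    |Pop p0 π TG g s - Pop p0 π TG g s'| ≤ L * (1 + Lpi) * (LT + Lp0) * dS s s' := by
  have hA := A_lip π Lpi hLpi hπ L hL g hg
  have hAc := A_cont π Lpi hLpi hπ L hL g hg
  set K := L * (1 + Lpi) with hK
  have hK0 : 0 ≤ K := by positivity
  have hi : ∀ (ν : ProbabilityMeasure X) (m : ProbabilityMeasure X0),
      Integrable (fun y0 => Aop π g (y0, ν)) (m : Measure X0) := fun ν m =>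
    cont_integrable _ (by fun_prop)
  have hTl := hT s.1 s'.1 s.2.1.1 s'.2.1.1 s.2.1.2 s'.2.1.2 s.2.2 s'.2.2
  have h1 := abs_int_sub_le (p0 s.1 s.2.1.1 s.2.2 : Measure X0) _ _
    (hi (TG s.1 s.2.1.1 s.2.1.2 s.2.2) _) (hi (TG s'.1 s'.2.1.1 s'.2.1.2 s'.2.2) _)
    (K * (LT * dS s s')) (fun y0 => by
      refine (hA _ _).trans ?_
      rw [dist_self, zero_add]
      exact mul_le_mul_of_nonneg_left hTl hK0)
  have h2 := scale_le (p0 s.1 s.2.1.1 s.2.2 : Measure X0) (p0 s'.1 s'.2.1.1 s'.2.2 : Measure X0)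
    dist _ (fun f hf => hp0 s.1 s'.1 s.2.1.1 s'.2.1.1 s.2.2 s'.2.2 f ((lip1_iff f).2 hf)) K hK0
    (fun y0 => Aop π g (y0, TG s'.1 s'.2.1.1 s'.2.1.2 s'.2.2)) (fun a b => by
      simpa [W1_self] using hA (a, TG s'.1 s'.2.1.1 s'.2.1.2 s'.2.2)
        (b, TG s'.1 s'.2.1.1 s'.2.1.2 s'.2.2))
  have h3 : K * (Lp0 * (dist s.1 s'.1 + dist s.2.1.1 s'.2.1.1 + W1 s.2.2 s'.2.2))
      ≤ K * (Lp0 * dS s s') := by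
    gcongr
    unfold dS
    linarith [dist_nonneg (x := s.2.1.2) (y := s'.2.1.2)]
  unfold Pop
  rw [abs_le] at *
  constructor <;> nlinarith [h1.1, h1.2, h2.1, h2.2]

/-! ### limiting kernel -/

/-- transition kernel of the limiting process -/
noncomputable def Klim (s : X0 × (U0 × Xi) × ProbabilityMeasure X) :
    Measure (X0 × (U0 × Xi) × ProbabilityMeasure X) :=
  ((p0 s.1 s.2.1.1 s.2.2 : Measure X0)).bind fun y0 =>
        ((π y0 (TG s.1 s.2.1.1 s.2.1.2 s.2.2) : Measure (U0 × Xi))).map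
          fun a => (y0, a, TG s.1 s.2.1.1 s.2.1.2 s.2.2)

include hπ hp0 hT in
theorem Klim_inner : Measurable fun z : (X0 × (U0 × Xi) × ProbabilityMeasure X) × X0 =>
    (π z.2 (TG z.1.1 z.1.2.1.1 z.1.2.1.2 z.1.2.2) : Measure (U0 × Xi)).map
          fun a => (z.2, a, TG z.1.1 z.1.2.1.1 z.1.2.1.2 z.1.2.2) := by
  have hTc := T_cont TG LT hT
  have hc := (pi_cont π Lpi hπ).comp
    (continuous_snd.prodMk (hTc.comp continuous_fst) :
      Continuous fun z : (X0 × (U0 × Xi) × ProbabilityMeasure X) × X0 =>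
      (z.2, TG z.1.1 z.1.2.1.1 z.1.2.1.2 z.1.2.2))
  refine meas_map2 _ (meas_coe _ hc) (fun z a => (z.2, a, TG z.1.1 z.1.2.1.1 z.1.2.1.2 z.1.2.2)) ?_
  -- TG is Giry-measurable
  have hTm : Measurable fun s : X0 × (U0 × Xi) × ProbabilityMeasure X =>
      TG s.1 s.2.1.1 s.2.1.2 s.2.2 := (meas_coe _ hTc).subtype_mk
  have := hTm.comp (measurable_fst.comp measurable_fst :
    Measurable fun w : ((X0 × (U0 × Xi) × ProbabilityMeasure X) × X0) × (U0 × Xi) => w.1.1)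
  simp only [Function.comp_def] at this
  exact (measurable_snd.comp measurable_fst).prodMk (measurable_snd.prodMk this)

include hπ hp0 hT in
theorem Klim_inner' (s : X0 × (U0 × Xi) × ProbabilityMeasure X) : Measurable fun y0 =>
    (π y0 (TG s.1 s.2.1.1 s.2.1.2 s.2.2) : Measure (U0 × Xi)).map
          fun a => (y0, a, TG s.1 s.2.1.1 s.2.1.2 s.2.2) :=
  (Klim_inner p0 π TG Lp0 Lpi LT hp0 hπ hT).comp (measurable_prodMk_left (x := s))

theorem map_prob (y0 : X0) (ν : ProbabilityMeasure X) :
    IsProbabilityMeasure ((π y0 ν : Measure (U0 × Xi)).map fun a => (y0, a, ν)) :=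
  Measure.isProbabilityMeasure_map (by fun_prop)

include hπ hp0 hT in
theorem Klim_meas : Measurable (Klim p0 π TG) := by
  have hc := (p0_cont p0 Lp0 hp0).comp
    (by fun_prop : Continuous fun s : X0 × (U0 × Xi) × ProbabilityMeasure X =>
      (s.1, s.2.1.1, s.2.2))
  exact meas_bind2 _ (meas_coe _ hc) _ (Klim_inner p0 π TG Lp0 Lpi LT hp0 hπ hT)

include hπ hp0 hT in
theorem Klim_prob (s : X0 × (U0 × Xi) × ProbabilityMeasure X) :
    IsProbabilityMeasure (Klim p0 π TG s) := by
  have := fun y0 => map_prob π y0 (TG s.1 s.2.1.1 s.2.1.2 s.2.2)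
  exact prob_bind _ _ (Klim_inner' p0 π TG Lp0 Lpi LT hp0 hπ hT s)

include hπ hp0 hT hg in
theorem Klim_int (s : X0 × (U0 × Xi) × ProbabilityMeasure X) :
    ∫ w, g w ∂(Klim p0 π TG s) = Pop p0 π TG g s := by
  have hgc := gcont hg
  obtain ⟨C, hC⟩ := cont_bdd hgc
  have := fun y0 => map_prob π y0 (TG s.1 s.2.1.1 s.2.1.2 s.2.2)
  unfold Klim
  rw [int_bind _ _ (Klim_inner' p0 π TG Lp0 Lpi LT hp0 hπ hT s) g hgc.measurable C hC]
  unfold Pop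
  congr 1; ext y0
  rw [integral_map (by fun_prop) hgc.measurable.aestronglyMeasurable]
  rfl

/-! ### N-agent kernel -/

/-- transition kernel of the `N`-agent process -/
noncomputable def KN [Nonempty X] (N : ℕ)
    (q : X0 → U0 → Xi → ProbabilityMeasure X → X → ProbabilityMeasure X)
    (s : X0 × (U0 × Xi) × (Fin N → X)) :
    Measure (X0 × (U0 × Xi) × (Fin N → X)) :=
  (((p0 s.1 s.2.1.1 (emp N s.2.2) : Measure X0)).prod
        (Measure.pi fun i => (q s.1 s.2.1.1 s.2.1.2 (emp N s.2.2) (s.2.2 i) : Measure X))).bind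
        fun y => ((π y.1 (emp N y.2) : Measure (U0 × Xi))).map fun a => (y.1, a, y.2)

variable [Nonempty X] {N : ℕ} (hN : N ≠ 0)
    (q : X0 → U0 → Xi → ProbabilityMeasure X → X → ProbabilityMeasure X)
    (hqc : Continuous fun z : X0 × U0 × Xi × ProbabilityMeasure X × X =>
      q z.1 z.2.1 z.2.2.1 z.2.2.2.1 z.2.2.2.2)

include hN hπ in
theorem KN_inner : Measurable fun y : X0 × (Fin N → X) =>
    (π y.1 (emp N y.2) : Measure (U0 × Xi)).map fun a => (y.1, a, y.2) := by
  have he := emp_cont (X := X) hN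
  have hc := (pi_cont π Lpi hπ).comp
    (by fun_prop : Continuous fun y : X0 × (Fin N → X) => (y.1, emp N y.2))
  exact meas_map2 _ (meas_coe _ hc) (fun y a => (y.1, a, y.2)) (by fun_prop)

theorem KN_inner_prob (y : X0 × (Fin N → X)) : IsProbabilityMeasure
    ((π y.1 (emp N y.2) : Measure (U0 × Xi)).map fun a => (y.1, a, y.2)) :=
  Measure.isProbabilityMeasure_map (by fun_prop)

include hπ hp0 hN hqc in
theorem KN_meas : Measurable (KN p0 π N q) := by
  have he := emp_cont (X := X) hN
  have hc0 := (p0_cont p0 Lp0 hp0).comp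
    (by fun_prop : Continuous fun s : X0 × (U0 × Xi) × (Fin N → X) =>
      (s.1, s.2.1.1, emp N s.2.2))
  have hc1 : ∀ i : Fin N, Continuous fun s : X0 × (U0 × Xi) × (Fin N → X) =>
      q s.1 s.2.1.1 s.2.1.2 (emp N s.2.2) (s.2.2 i) := fun i => hqc.comp
    (by fun_prop : Continuous fun s : X0 × (U0 × Xi) × (Fin N → X) =>
      (s.1, s.2.1.1, s.2.1.2, emp N s.2.2, s.2.2 i))
  have hc2 := ProbabilityMeasure.continuous_pi.comp (continuous_pi hc1)
  have hc3 := ProbabilityMeasure.continuous_prod.comp (hc0.prodMk hc2)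
  exact (Measure.measurable_bind' (KN_inner π Lpi hπ hN)).comp (meas_coe _ hc3)

include hπ hN in
theorem KN_prob (s : X0 × (U0 × Xi) × (Fin N → X)) : IsProbabilityMeasure (KN p0 π N q s) := by
  have := KN_inner_prob (N := N) π
  exact prob_bind _ _ (KN_inner π Lpi hπ hN)

include hπ hN hLpi hL hg in
theorem KN_int (δ : ℝ) (s : X0 × (U0 × Xi) × (Fin N → X))
    (hδ : ∫ y, W1 (emp N y) (TG s.1 s.2.1.1 s.2.1.2 (emp N s.2.2)) ∂(Measure.pi fun i =>
      (q s.1 s.2.1.1 s.2.1.2 (emp N s.2.2) (s.2.2 i) : Measure X)) ≤ δ) :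
    |∫ w, g (w.1, w.2.1, emp N w.2.2) ∂(KN p0 π N q s)
      - Pop p0 π TG g (s.1, s.2.1, emp N s.2.2)| ≤ L * (1 + Lpi) * δ := by
  have hgc := gcont hg
  have he := emp_cont (X := X) hN
  have hA := A_lip π Lpi hLpi hπ L hL g hg
  have hAc := A_cont π Lpi hLpi hπ L hL g hg
  have hgc2 : Continuous fun w : X0 × (U0 × Xi) × (Fin N → X) =>
    g (w.1, w.2.1, emp N w.2.2) := by fun_prop
  obtain ⟨C, hC⟩ := cont_bdd hgc2
  have := KN_inner_prob (N := N) π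
  unfold KN
  rw [int_bind _ _ (KN_inner π Lpi hπ hN) _ hgc2.measurable C hC]
  have h1 : ∀ y : X0 × (Fin N → X), ∫ w, g (w.1, w.2.1, emp N w.2.2)
      ∂((π y.1 (emp N y.2) : Measure (U0 × Xi)).map fun a => (y.1, a, y.2))
      = Aop π g (y.1, emp N y.2) := fun y => by
    rw [integral_map (by fun_prop) hgc2.measurable.aestronglyMeasurable]
    rfl
  simp_rw [h1]
  have hAc2 : Continuous fun y : X0 × (Fin N → X) => Aop π g (y.1, emp N y.2) := by fun_prop
  set ν := TG s.1 s.2.1.1 s.2.1.2 (emp N s.2.2) with hν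
  set Q := Measure.pi fun i =>
      (q s.1 s.2.1.1 s.2.1.2 (emp N s.2.2) (s.2.2 i) : Measure X) with hQ
  have hintg := cont_integrable
    ((p0 s.1 s.2.1.1 (emp N s.2.2) : Measure X0).prod Q) hAc2
  rw [integral_prod _ hintg]
  unfold Pop
  refine abs_int_sub_le _ _ _ hintg.integral_prod_left (cont_integrable _ (by fun_prop)) _
    fun y0 => ?_
  have h2 : ∫ y, Aop π g (y0, emp N y) ∂Q - Aop π g (y0, ν)
      = ∫ y, (Aop π g (y0, emp N y) - Aop π g (y0, ν)) ∂Q := by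
    rw [integral_sub (cont_integrable _ (by fun_prop)) (integrable_const _)]
    simp
  change |∫ y, Aop π g (y0, emp N y) ∂Q - Aop π g (y0, ν)| ≤ _
  rw [h2]
  have hW := (W1_cont ν).comp he
  refine (abs_integral_le_integral_abs).trans ?_
  calc ∫ y, |Aop π g (y0, emp N y) - Aop π g (y0, ν)| ∂Q
      ≤ ∫ y, L * (1 + Lpi) * W1 (emp N y) ν ∂Q := by
        refine integral_mono (cont_integrable _ (by fun_prop))
          (cont_integrable _ (hW.const_mul _)) fun y => ?_
        simpa using hA (y0, emp N y) (y0, ν)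
    _ = L * (1 + Lpi) * ∫ y, W1 (emp N y) ν ∂Q := integral_const_mul _ _
    _ ≤ L * (1 + Lpi) * δ := by gcongr

end
end helpersD

section helpersE
open Filter Topology ProbabilityTheory

variable {X U X0 U0 Xi Θ : Type*}
    [MetricSpace X] [CompactSpace X] [MeasurableSpace X] [BorelSpace X] [Nonempty X]
    [MeasurableSpace U]
    [MetricSpace X0] [CompactSpace X0] [MeasurableSpace X0] [BorelSpace X0]
    [MetricSpace U0] [CompactSpace U0] [MeasurableSpace U0] [BorelSpace U0]
    [MetricSpace Xi] [CompactSpace Xi] [MeasurableSpace Xi] [BorelSpace Xi]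
    (p : X → U → X0 → U0 → ProbabilityMeasure X → ProbabilityMeasure X)
    (Γ : Xi → X → ProbabilityMeasure U)
    (p0 : X0 → U0 → ProbabilityMeasure X → ProbabilityMeasure X0)
    (pit : Θ → X0 → ProbabilityMeasure X → ProbabilityMeasure (U0 × Xi))
    (TG : X0 → U0 → Xi → ProbabilityMeasure X → ProbabilityMeasure X)
    (q : X0 → U0 → Xi → ProbabilityMeasure X → X → ProbabilityMeasure X)

theorem lawN_succ
    (hq : ∀ x0 u0 ξ μ x, (q x0 u0 ξ μ x : Measure X) =
      (Γ ξ x : Measure U).bind fun u => (p x u x0 u0 μ : Measure X))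
    (θ : Θ) (N : ℕ) (ι : Measure (X0 × (U0 × Xi) × (Fin N → X))) (t : ℕ) :
    pLawNFrom p p0 Γ pit θ N ι (t + 1)
      = (pLawNFrom p p0 Γ pit θ N ι t).bind (KN p0 (pit θ) N q) := by
  have : KN p0 (pit θ) N q = fun s : X0 × (U0 × Xi) × (Fin N → X) =>
      (((p0 s.1 s.2.1.1 (emp N s.2.2) : Measure X0)).prod
        (Measure.pi fun i => ((Γ s.2.1.2 (s.2.2 i) : Measure U)).bind
          fun u => (p (s.2.2 i) u s.1 s.2.1.1 (emp N s.2.2) : Measure X))).bind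
        fun y => ((pit θ y.1 (emp N y.2) : Measure (U0 × Xi))).map fun a => (y.1, a, y.2) := by
    funext s
    simp only [KN, hq]
  rw [this]
  rfl

theorem lawLim_succ (θ : Θ) (ι : Measure (X0 × (U0 × Xi) × ProbabilityMeasure X)) (t : ℕ) :
    pLimLawFrom p0 pit TG θ ι (t + 1)
      = (pLimLawFrom p0 pit TG θ ι t).bind (Klim p0 (pit θ) TG) := rfl

variable (Lp0 Lpi LT : ℝ) (hLp0 : 0 ≤ Lp0) (hLpi : 0 ≤ Lpi) (hLT : 0 ≤ LT)
    (hp0 : ∀ (x0 x0' : X0) (u0 u0' : U0) (μ μ' : ProbabilityMeasure X) (f : X0 → ℝ),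
        LipschitzWith 1 f →
      |∫ y, f y ∂(p0 x0 u0 μ : Measure X0) - ∫ y, f y ∂(p0 x0' u0' μ' : Measure X0)|
        ≤ Lp0 * (dist x0 x0' + dist u0 u0' + W1 μ μ'))
    (hπ : ∀ (θ : Θ) (x0 x0' : X0) (μ μ' : ProbabilityMeasure X) (g : U0 × Xi → ℝ),
      (∀ a b : U0 × Xi, |g a - g b| ≤ dist a.1 b.1 + dist a.2 b.2) →
      |∫ a, g a ∂(pit θ x0 μ : Measure (U0 × Xi)) - ∫ a, g a ∂(pit θ x0' μ' : Measure (U0 × Xi))|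
        ≤ Lpi * (dist x0 x0' + W1 μ μ'))
    (hT : ∀ (x0 x0' : X0) (u0 u0' : U0) (ξ ξ' : Xi) (μ μ' : ProbabilityMeasure X),
      W1 (TG x0 u0 ξ μ) (TG x0' u0' ξ' μ')
        ≤ LT * (dist x0 x0' + dist u0 u0' + dist ξ ξ' + W1 μ μ'))
    (hq : ∀ x0 u0 ξ μ x, (q x0 u0 ξ μ x : Measure X) =
      (Γ ξ x : Measure U).bind fun u => (p x u x0 u0 μ : Measure X))
    (hqc : Continuous fun z : X0 × U0 × Xi × ProbabilityMeasure X × X =>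
      q z.1 z.2.1 z.2.2.1 z.2.2.2.1 z.2.2.2.2)
    (hTe : ∀ N : ℕ, N ≠ 0 → ∀ (x0 : X0) (u0 : U0) (ξ : Xi) (x : Fin N → X) (f : X → ℝ),
      LipschitzWith 1 f → ∫ y, f y ∂(TG x0 u0 ξ (emp N x) : Measure X) =
        (N : ℝ)⁻¹ * ∑ i, ∫ y, f y ∂(q x0 u0 ξ (emp N x) (x i) : Measure X))

include hp0 hπ hq hqc in
theorem lawN_prob {N : ℕ} (hN : N ≠ 0) (θ : Θ) (ι : Measure (X0 × (U0 × Xi) × (Fin N → X)))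
    [IsProbabilityMeasure ι] (t : ℕ) :
    IsProbabilityMeasure (pLawNFrom p p0 Γ pit θ N ι t) := by
  induction t with
  | zero => assumption
  | succ t ih =>
    rw [lawN_succ p Γ p0 pit q hq]
    have := KN_prob p0 (pit θ) Lpi (hπ θ) hN q
    exact prob_bind _ _ (KN_meas p0 (pit θ) Lp0 Lpi hp0 (hπ θ) hN q hqc)

include hp0 hπ hT in
theorem lawLim_prob (θ : Θ) (ι : Measure (X0 × (U0 × Xi) × ProbabilityMeasure X))
    [IsProbabilityMeasure ι] (t : ℕ) :
    IsProbabilityMeasure (pLimLawFrom p0 pit TG θ ι t) := by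
  induction t with
  | zero => assumption
  | succ t ih =>
    rw [lawLim_succ]
    have := Klim_prob p0 (pit θ) TG Lp0 Lpi LT hp0 (hπ θ) hT
    exact prob_bind _ _ (Klim_meas p0 (pit θ) TG Lp0 Lpi LT hp0 (hπ θ) hT)

theorem init_prob (N : ℕ) (x0 : X0) (a : U0 × Xi) (μ : ProbabilityMeasure X) :
    IsProbabilityMeasure ((Measure.pi fun _ : Fin N => (μ : Measure X)).map
              fun x => (x0, a, x)) :=
  Measure.isProbabilityMeasure_map (by fun_prop)

include hp0 hπ hT hq hqc hTe hLp0 hLpi hLT in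
theorem law_conv (t : ℕ) : ∀ L : ℝ, 0 ≤ L → ∀ ε : ℝ, 0 < ε → ∃ N0 : ℕ, N0 ≠ 0 ∧ ∀ N ≥ N0,
    ∀ (θ : Θ) (x0 : X0) (a : U0 × Xi) (μ : ProbabilityMeasure X)
      (g : X0 × (U0 × Xi) × ProbabilityMeasure X → ℝ), (∀ s s', |g s - g s'| ≤ L * dS s s') →
      |∫ s, g (s.1, s.2.1, emp N s.2.2) ∂(pLawNFrom p p0 Γ pit θ N
            ((Measure.pi fun _ : Fin N => (μ : Measure X)).map fun x => (x0, a, x)) t)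
        - ∫ s, g s ∂(pLimLawFrom p0 pit TG θ (Measure.dirac (x0, a, μ)) t)| ≤ ε := by
  induction t with
  | zero =>
    intro L hL ε hε
    obtain ⟨N0, hN0, h⟩ := lln (X := X) (ε / (L + 1)) (by positivity)
    refine ⟨N0, hN0, fun N hN θ x0 a μ g hg => ?_⟩
    have hNz : N ≠ 0 := by omega
    have hgc := gcont hg
    have he := emp_cont (X := X) hNz
    have hgc2 : Continuous fun w : X0 × (U0 × Xi) × (Fin N → X) =>
      g (w.1, w.2.1, emp N w.2.2) := by fun_prop
    have hl := h N hN (fun _ => μ) μ (fun f _ => by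
      have : (N : ℝ) ≠ 0 := by exact_mod_cast hNz
      simp [this])
    simp only [pLawNFrom, pLimLawFrom]
    rw [integral_map (by fun_prop) hgc2.measurable.aestronglyMeasurable,
      integral_dirac' _ _ hgc.measurable.stronglyMeasurable]
    set Q := Measure.pi fun _ : Fin N => (μ : Measure X)
    have h2 : ∫ y, g (x0, a, emp N y) ∂Q - g (x0, a, μ)
        = ∫ y, (g (x0, a, emp N y) - g (x0, a, μ)) ∂Q := by
      rw [integral_sub (cont_integrable _ (by fun_prop)) (integrable_const _)]
      simp
    rw [h2]
    have hW := (W1_cont μ).comp he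
    refine (abs_integral_le_integral_abs).trans ?_
    calc ∫ y, |g (x0, a, emp N y) - g (x0, a, μ)| ∂Q
        ≤ ∫ y, L * W1 (emp N y) μ ∂Q := by
          refine integral_mono (cont_integrable _ (by fun_prop))
            (cont_integrable _ (hW.const_mul _)) fun y => ?_
          simpa [dS] using hg (x0, a, emp N y) (x0, a, μ)
      _ = L * ∫ y, W1 (emp N y) μ ∂Q := integral_const_mul _ _
      _ ≤ L * (ε / (L + 1)) := by gcongr
      _ ≤ ε := by
        rw [mul_div_assoc', div_le_iff₀ (by positivity)]
        nlinarith
  | succ t ih =>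
    intro L hL ε hε
    obtain ⟨N1, hN1, h1⟩ := ih (L * (1 + Lpi) * (LT + Lp0)) (by positivity) (ε / 2) (by positivity)
    obtain ⟨N2, hN2, h2⟩ := lln (X := X) (ε / 2 / (L * (1 + Lpi) + 1)) (by positivity)
    refine ⟨max N1 N2, by omega, fun N hN θ x0 a μ g hg => ?_⟩
    have hNz : N ≠ 0 := by omega
    have hgc := gcont hg
    have he := emp_cont (X := X) hNz
    have hgc2 : Continuous fun w : X0 × (U0 × Xi) × (Fin N → X) =>
      g (w.1, w.2.1, emp N w.2.2) := by fun_prop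
    obtain ⟨C, hC⟩ := cont_bdd hgc
    have hPl := P_lip p0 (pit θ) TG Lp0 Lpi LT hLp0 hLpi hLT hp0 (hπ θ) hT L hL g hg
    have hPc := gcont hPl
    have i1 := init_prob N x0 a μ
    have i2 := lawN_prob p Γ p0 pit q Lp0 Lpi hp0 hπ hq hqc hNz θ
      ((Measure.pi fun _ : Fin N => (μ : Measure X)).map fun x => (x0, a, x)) t
    have i3 := lawLim_prob p0 pit TG Lp0 Lpi LT hp0 hπ hT θ (Measure.dirac (x0, a, μ)) t
    have hKm := KN_meas p0 (pit θ) Lp0 Lpi hp0 (hπ θ) hNz q hqc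
    have i4 := KN_prob p0 (pit θ) Lpi (hπ θ) hNz q
    have i5 := Klim_prob p0 (pit θ) TG Lp0 Lpi LT hp0 (hπ θ) hT
    rw [lawN_succ p Γ p0 pit q hq, lawLim_succ,
      int_bind _ _ hKm _ hgc2.measurable C (fun v => hC _),
      int_bind _ _ (Klim_meas p0 (pit θ) TG Lp0 Lpi LT hp0 (hπ θ) hT) g hgc.measurable C hC]
    simp_rw [Klim_int p0 (pit θ) TG Lp0 Lpi LT hp0 (hπ θ) hT L g hg]
    have h3 := h1 N (by omega) θ x0 a μ _ hPl
    have hmeas : Measurable fun s => ∫ w, g (w.1, w.2.1, emp N w.2.2) ∂(KN p0 (pit θ) N q s) := by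
      have hk : StronglyMeasurable fun s => ∫ w, g (w.1, w.2.1, emp N w.2.2)
          ∂((⟨KN p0 (pit θ) N q, hKm⟩ : Kernel _ _) s) :=
        StronglyMeasurable.integral_kernel hgc2.measurable.stronglyMeasurable
      exact hk.measurable
    have hintg : Integrable (fun s => ∫ w, g (w.1, w.2.1, emp N w.2.2) ∂(KN p0 (pit θ) N q s))
        (pLawNFrom p p0 Γ pit θ N
          ((Measure.pi fun _ : Fin N => (μ : Measure X)).map fun x => (x0, a, x)) t) :=
      Integrable.of_bound hmeas.aestronglyMeasurable C
        (Eventually.of_forall fun s => abs_int_le _ _ C fun w => hC _)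
    have h4 := abs_int_sub_le (pLawNFrom p p0 Γ pit θ N
          ((Measure.pi fun _ : Fin N => (μ : Measure X)).map fun x => (x0, a, x)) t) _
        (fun s => Pop p0 (pit θ) TG g (s.1, s.2.1, emp N s.2.2)) hintg
        (cont_integrable _ (by fun_prop)) (L * (1 + Lpi) * (ε / 2 / (L * (1 + Lpi) + 1)))
        (fun s => KN_int p0 (pit θ) TG Lpi hLpi (hπ θ) L hL g hg hNz q _ s
          (h2 N (by omega) _ _ fun f hf => hTe N hNz _ _ _ _ f hf))
    have h5 : L * (1 + Lpi) * (ε / 2 / (L * (1 + Lpi) + 1)) ≤ ε / 2 := by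
      have hK : 0 ≤ L * (1 + Lpi) := by positivity
      rw [mul_div_assoc', div_le_iff₀ (by positivity)]
      nlinarith
    rw [abs_le] at *
    constructor <;> linarith [h3.1, h3.2, h4.1, h4.2]

/-- truncation argument for discounted sums -/
theorem disc_sum {ι : Type*} (γ : ℝ) (hγ0 : 0 < γ) (hγ1 : γ < 1) (B : ℝ) (hB : 0 ≤ B)
    (a b : ℕ → ι → ℕ → ℝ) (M : ℕ)
    (ha : ∀ N ≥ M, ∀ i t, |a N i t| ≤ B) (hb : ∀ N ≥ M, ∀ i t, |b N i t| ≤ B)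
    (h : ∀ t, ∀ ε > (0 : ℝ), ∃ N0, ∀ N ≥ N0, ∀ i, |a N i t - b N i t| ≤ ε) :
    ∀ ε > (0 : ℝ), ∃ N0, ∀ N ≥ N0, ∀ i,
      |(∑' t, γ ^ t * a N i t) - ∑' t, γ ^ t * b N i t| ≤ ε := by
  intro ε hε
  have h1γ : 0 < 1 - γ := by linarith
  obtain ⟨T, hT⟩ := exists_pow_lt_of_lt_one
    (show 0 < ε * (1 - γ) / 2 / (2 * B + 1) by positivity) hγ1
  choose n hn using fun t => h t (ε * (1 - γ) / 2) (by positivity)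
  refine ⟨max M ((Finset.range T).sup n), fun N hN i => ?_⟩
  have hNM : M ≤ N := (le_max_left _ _).trans hN
  have hg := summable_geometric_of_lt_one hγ0.le hγ1
  have hS : ∀ c : ℕ → ℝ, (∀ t, |c t| ≤ B) → Summable fun t => γ ^ t * c t := fun c hc => by
    refine Summable.of_norm_bounded (hg.mul_right B) fun t => ?_
    rw [norm_mul, Real.norm_eq_abs, Real.norm_eq_abs, abs_of_pos (pow_pos hγ0 t)]
    exact mul_le_mul_of_nonneg_left (hc t) (by positivity)
  have sa := hS _ (ha N hNM i)
  have sb := hS _ (hb N hNM i)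
  rw [← sa.tsum_sub sb]
  have hbd : ∀ t, ‖γ ^ t * a N i t - γ ^ t * b N i t‖
      ≤ γ ^ t * (ε * (1 - γ) / 2) + (if T ≤ t then γ ^ t * (2 * B) else 0) := fun t => by
    rw [← mul_sub, norm_mul, Real.norm_eq_abs, Real.norm_eq_abs, abs_of_pos (pow_pos hγ0 t)]
    have hp : 0 < γ ^ t := pow_pos hγ0 t
    split_ifs with ht
    · rw [← mul_add]
      refine mul_le_mul_of_nonneg_left ?_ hp.le
      have := abs_sub (a N i t) (b N i t)
      have h1 := ha N hNM i t
      have h2 := hb N hNM i t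
      have h3 : 0 < ε * (1 - γ) / 2 := by positivity
      linarith
    · rw [add_zero]
      refine mul_le_mul_of_nonneg_left (hn t N ?_ i) hp.le
      exact (Finset.le_sup (f := n) (Finset.mem_range.2 (not_le.1 ht))).trans
        ((le_max_right _ _).trans hN)
  have hs2 : HasSum (fun t => if T ≤ t then γ ^ t * (2 * B) else 0)
      (γ ^ T * (1 - γ)⁻¹ * (2 * B)) := by
    have h0 := (hasSum_geometric_of_lt_one hγ0.le hγ1).mul_left (γ ^ T) |>.mul_right (2 * B)
    rw [← hasSum_nat_add_iff' T]
    have : ∑ i ∈ Finset.range T, (if T ≤ i then γ ^ i * (2 * B) else 0) = 0 :=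
      Finset.sum_eq_zero fun i hi => by
        rw [if_neg (by have := Finset.mem_range.1 hi; omega)]
    rw [this, sub_zero]
    refine h0.congr_fun ?_ |> fun h => h
    intro k
    simp [pow_add, mul_comm]
  have hs1 := (hasSum_geometric_of_lt_one hγ0.le hγ1).mul_right (ε * (1 - γ) / 2)
  have := tsum_of_norm_bounded (hs1.add hs2) hbd
  refine (Real.norm_eq_abs _ ▸ this).trans ?_
  have e1 : (1 - γ)⁻¹ * (ε * (1 - γ) / 2) = ε / 2 := by field_simp
  have e2 : γ ^ T * (1 - γ)⁻¹ * (2 * B) ≤ ε / 2 := by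
    rw [lt_div_iff₀ (by positivity)] at hT
    have : γ ^ T * (2 * B) ≤ ε * (1 - γ) / 2 := by
      nlinarith [pow_pos hγ0 T]
    calc γ ^ T * (1 - γ)⁻¹ * (2 * B) = (1 - γ)⁻¹ * (γ ^ T * (2 * B)) := by ring
      _ ≤ (1 - γ)⁻¹ * (ε * (1 - γ) / 2) := by gcongr
      _ = ε / 2 := e1
  linarith

end helpersE

/-- uniform convergence of the action-value functions. Under the parametrized
M3FC assumptions, the `N`-agent action-value function
`Q̂^θ(x⁰,μ,u⁰,ξ) = E[Σ_t γ^t r(x⁰ₜ^N,u⁰ₜ^N,μₜ^N) | x⁰₀=x⁰, μ₀=μ, u⁰₀=u⁰, ξ₀=ξ]` converges to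
its limiting M3FC MDP counterpart `Q^θ`, uniformly on `𝒳⁰ × 𝒫(𝒳) × 𝒰⁰ × Ξ` and uniformly over
`θ`, as `N → ∞`. -/
theorem statement18 {X U X0 U0 Xi Θ : Type*}
    [MetricSpace X] [CompactSpace X] [MeasurableSpace X] [BorelSpace X] [Nonempty X]
    [MetricSpace U] [CompactSpace U] [MeasurableSpace U] [BorelSpace U]
    [MetricSpace X0] [CompactSpace X0] [MeasurableSpace X0] [BorelSpace X0]
    [MetricSpace U0] [CompactSpace U0] [MeasurableSpace U0] [BorelSpace U0]
    [MetricSpace Xi] [CompactSpace Xi] [MeasurableSpace Xi] [BorelSpace Xi]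
    [NormedAddCommGroup Θ] [NormedSpace ℝ Θ] [CompleteSpace Θ]
    (Lp Lp0 Lr LPi LΓ Lpit Ls Cs LF : ℝ)
    (p : X → U → X0 → U0 → ProbabilityMeasure X → ProbabilityMeasure X)
    (hp : ∀ (x x' : X) (u u' : U) (x0 x0' : X0) (u0 u0' : U0)
        (μ μ' : ProbabilityMeasure X) (f : X → ℝ), LipschitzWith 1 f →
      |∫ y, f y ∂(p x u x0 u0 μ : Measure X) - ∫ y, f y ∂(p x' u' x0' u0' μ' : Measure X)|
        ≤ Lp * (dist x x' + dist u u' + dist x0 x0' + dist u0 u0' + W1 μ μ'))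
    (p0 : X0 → U0 → ProbabilityMeasure X → ProbabilityMeasure X0)
    (hp0 : ∀ (x0 x0' : X0) (u0 u0' : U0) (μ μ' : ProbabilityMeasure X) (f : X0 → ℝ),
        LipschitzWith 1 f →
      |∫ y, f y ∂(p0 x0 u0 μ : Measure X0) - ∫ y, f y ∂(p0 x0' u0' μ' : Measure X0)|
        ≤ Lp0 * (dist x0 x0' + dist u0 u0' + W1 μ μ'))
    (r : X0 → U0 → ProbabilityMeasure X → ℝ)
    (hr : ∀ (x0 x0' : X0) (u0 u0' : U0) (μ μ' : ProbabilityMeasure X),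
      |r x0 u0 μ - r x0' u0' μ'| ≤ Lr * (dist x0 x0' + dist u0 u0' + W1 μ μ'))
    (Γ : Xi → X → ProbabilityMeasure U)
    (hΓrule : ∀ (ξ : Xi) (x x' : X) (g : U → ℝ), LipschitzWith 1 g →
      |∫ u, g u ∂(Γ ξ x : Measure U) - ∫ u, g u ∂(Γ ξ x' : Measure U)| ≤ LPi * dist x x')
    (hΓ : ∀ (ξ ξ' : Xi) (x : X) (g : U → ℝ), LipschitzWith 1 g →
      |∫ u, g u ∂(Γ ξ x : Measure U) - ∫ u, g u ∂(Γ ξ' x : Measure U)| ≤ LΓ * dist ξ ξ')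
    (pit : Θ → X0 → ProbabilityMeasure X → ProbabilityMeasure (U0 × Xi))
    (hpit : ∀ (θ θ' : Θ) (x0 x0' : X0) (μ μ' : ProbabilityMeasure X) (g : U0 × Xi → ℝ),
      (∀ a b : U0 × Xi, |g a - g b| ≤ dist a.1 b.1 + dist a.2 b.2) →
      |∫ a, g a ∂(pit θ x0 μ : Measure (U0 × Xi))
          - ∫ a, g a ∂(pit θ' x0' μ' : Measure (U0 × Xi))|
        ≤ Lpit * (dist θ θ' + dist x0 x0' + W1 μ μ'))
    (score : Θ → X0 → ProbabilityMeasure X → U0 × Xi → Θ)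
    (hscoreB : ∀ θ x0 μ a, ‖score θ x0 μ a‖ ≤ Cs)
    (hscoreL : ∀ (θ θ' : Θ) (x0 x0' : X0) (μ μ' : ProbabilityMeasure X) (a a' : U0 × Xi),
      ‖score θ x0 μ a - score θ' x0' μ' a'‖
        ≤ Ls * (dist θ θ' + dist x0 x0' + W1 μ μ' + dist a.1 a'.1 + dist a.2 a'.2))
    (μ0 : ProbabilityMeasure X) (x00 : X0)
    (TG : X0 → U0 → Xi → ProbabilityMeasure X → ProbabilityMeasure X)
    (hTG : ∀ (x0 : X0) (u0 : U0) (ξ : Xi) (μ : ProbabilityMeasure X),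
      (TG x0 u0 ξ μ : Measure X) = (μ : Measure X).bind fun x =>
        ((Γ ξ x : Measure U)).bind fun u => (p x u x0 u0 μ : Measure X))
    (γ : ℝ) (hγ0 : 0 < γ) (hγ1 : γ < 1) :
    ∀ ε > (0 : ℝ), ∃ N0 : ℕ, ∀ N ≥ N0, ∀ (θ : Θ) (x0 : X0) (μ : ProbabilityMeasure X)
      (u0 : U0) (ξ : Xi),
      |(∑' t : ℕ, γ ^ t * ∫ s, r s.1 s.2.1.1 (emp N s.2.2)
          ∂(pLawNFrom p p0 Γ pit θ N
            ((Measure.pi fun _ : Fin N => (μ : Measure X)).map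
              fun x => (x0, (u0, ξ), x)) t))
        - ∑' t : ℕ, γ ^ t * ∫ s, r s.1 s.2.1.1 s.2.2
          ∂(pLimLawFrom p0 pit TG θ (Measure.dirac (x0, (u0, ξ), μ)) t)| ≤ ε := by
  have hWn : ∀ μ μ' : ProbabilityMeasure X, 0 ≤ W1 μ μ' := W1_nonneg
  have hp' : ∀ (x x' : X) (u u' : U) (x0 x0' : X0) (u0 u0' : U0)
        (μ μ' : ProbabilityMeasure X) (f : X → ℝ), LipschitzWith 1 f →
      |∫ y, f y ∂(p x u x0 u0 μ : Measure X) - ∫ y, f y ∂(p x' u' x0' u0' μ' : Measure X)|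
        ≤ |Lp| * (dist x x' + dist u u' + dist x0 x0' + dist u0 u0' + W1 μ μ') := by
    intro x x' u u' x0 x0' u0 u0' μ μ' f hf
    refine (hp x x' u u' x0 x0' u0 u0' μ μ' f hf).trans ?_
    have := hWn μ μ'
    exact mul_le_mul_of_nonneg_right (le_abs_self _) (by positivity)
  have hp0' : ∀ (x0 x0' : X0) (u0 u0' : U0) (μ μ' : ProbabilityMeasure X) (f : X0 → ℝ),
        LipschitzWith 1 f →
      |∫ y, f y ∂(p0 x0 u0 μ : Measure X0) - ∫ y, f y ∂(p0 x0' u0' μ' : Measure X0)|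
        ≤ |Lp0| * (dist x0 x0' + dist u0 u0' + W1 μ μ') := by
    intro x0 x0' u0 u0' μ μ' f hf
    refine (hp0 x0 x0' u0 u0' μ μ' f hf).trans ?_
    have := hWn μ μ'
    exact mul_le_mul_of_nonneg_right (le_abs_self _) (by positivity)
  have hΓrule' : ∀ (ξ : Xi) (x x' : X) (g : U → ℝ), LipschitzWith 1 g →
      |∫ u, g u ∂(Γ ξ x : Measure U) - ∫ u, g u ∂(Γ ξ x' : Measure U)| ≤ |LPi| * dist x x' :=
    fun ξ x x' g hg => (hΓrule ξ x x' g hg).trans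
      (mul_le_mul_of_nonneg_right (le_abs_self _) dist_nonneg)
  have hΓ' : ∀ (ξ ξ' : Xi) (x : X) (g : U → ℝ), LipschitzWith 1 g →
      |∫ u, g u ∂(Γ ξ x : Measure U) - ∫ u, g u ∂(Γ ξ' x : Measure U)| ≤ |LΓ| * dist ξ ξ' :=
    fun ξ ξ' x g hg => (hΓ ξ ξ' x g hg).trans
      (mul_le_mul_of_nonneg_right (le_abs_self _) dist_nonneg)
  have hπ' : ∀ (θ : Θ) (x0 x0' : X0) (μ μ' : ProbabilityMeasure X) (g : U0 × Xi → ℝ),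
      (∀ a b : U0 × Xi, |g a - g b| ≤ dist a.1 b.1 + dist a.2 b.2) →
      |∫ a, g a ∂(pit θ x0 μ : Measure (U0 × Xi)) - ∫ a, g a ∂(pit θ x0' μ' : Measure (U0 × Xi))|
        ≤ |Lpit| * (dist x0 x0' + W1 μ μ') := by
    intro θ x0 x0' μ μ' g hg
    have h1 := hpit θ θ x0 x0' μ μ' g hg
    rw [dist_self, zero_add] at h1
    refine h1.trans ?_
    have := hWn μ μ'
    exact mul_le_mul_of_nonneg_right (le_abs_self _) (by positivity)
  obtain ⟨q, hq⟩ := q_exists p Γ |Lp| hp'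
  have hqc := q_cont p Γ |Lp| |LPi| |LΓ| (abs_nonneg _) (abs_nonneg _) (abs_nonneg _) hp' hΓrule'
    hΓ' q hq
  have hT := T_lip p Γ |Lp| |LPi| |LΓ| (abs_nonneg _) (abs_nonneg _) (abs_nonneg _) hp' hΓrule'
    hΓ' q hq TG hTG
  have hTe : ∀ N : ℕ, N ≠ 0 → ∀ (x0 : X0) (u0 : U0) (ξ : Xi) (x : Fin N → X) (f : X → ℝ),
      LipschitzWith 1 f → ∫ y, f y ∂(TG x0 u0 ξ (emp N x) : Measure X) =
        (N : ℝ)⁻¹ * ∑ i, ∫ y, f y ∂(q x0 u0 ξ (emp N x) (x i) : Measure X) :=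
    fun N hN x0 u0 ξ x f hf => T_emp p Γ |Lp| |LPi| |LΓ| (abs_nonneg _) (abs_nonneg _)
      (abs_nonneg _) hp' hΓrule' hΓ' q hq TG hTG hN x0 u0 ξ x f hf
  have hLT : 0 ≤ 2 * (|Lp| * (1 + |LPi| + |LΓ|)) := by positivity
  have hg : ∀ s s' : X0 × (U0 × Xi) × ProbabilityMeasure X,
      |r s.1 s.2.1.1 s.2.2 - r s'.1 s'.2.1.1 s'.2.2| ≤ |Lr| * dS s s' := by
    intro s s'
    refine (hr _ _ _ _ _ _).trans ?_
    have h1 := hWn s.2.2 s'.2.2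
    refine (mul_le_mul_of_nonneg_right (le_abs_self Lr) (by positivity)).trans ?_
    refine mul_le_mul_of_nonneg_left ?_ (abs_nonneg _)
    unfold dS
    linarith [dist_nonneg (x := s.2.1.2) (y := s'.2.1.2)]
  obtain ⟨B, hB⟩ := cont_bdd
    (gcont (g := fun s : X0 × (U0 × Xi) × ProbabilityMeasure X => r s.1 s.2.1.1 s.2.2) hg)
  have hB' : ∀ s : X0 × (U0 × Xi) × ProbabilityMeasure X, |r s.1 s.2.1.1 s.2.2| ≤ |B| :=
    fun s => (hB s).trans (le_abs_self B)
  have key := disc_sum (ι := Θ × X0 × (U0 × Xi) × ProbabilityMeasure X) γ hγ0 hγ1 |B| (abs_nonneg B)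
    (fun N i t => ∫ s, r s.1 s.2.1.1 (emp N s.2.2)
          ∂(pLawNFrom p p0 Γ pit i.1 N
            ((Measure.pi fun _ : Fin N => (i.2.2.2 : Measure X)).map
              fun x => (i.2.1, i.2.2.1, x)) t))
    (fun N i t => ∫ s, r s.1 s.2.1.1 s.2.2
          ∂(pLimLawFrom p0 pit TG i.1 (Measure.dirac (i.2.1, i.2.2.1, i.2.2.2)) t)) 1
    (fun N hN i t => by
      have i1 := init_prob N i.2.1 i.2.2.1 i.2.2.2
      have i2 := lawN_prob p Γ p0 pit q |Lp0| |Lpit| hp0' hπ' hq hqc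
        (show N ≠ 0 by omega) i.1 ((Measure.pi fun _ : Fin N => (i.2.2.2 : Measure X)).map
              fun x => (i.2.1, i.2.2.1, x)) t
      exact abs_int_le _ _ _ fun s => hB' (s.1, s.2.1, emp N s.2.2))
    (fun N hN i t => by
      have i3 := lawLim_prob p0 pit TG |Lp0| |Lpit| _ hp0' hπ' hT i.1
        (Measure.dirac (i.2.1, i.2.2.1, i.2.2.2)) t
      exact abs_int_le _ _ _ fun s => hB' s)
    (fun t ε hε => by
      obtain ⟨N0, -, h⟩ := law_conv p Γ p0 pit TG q |Lp0| |Lpit| _ (abs_nonneg _) (abs_nonneg _)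
        hLT hp0' hπ' hT hq hqc hTe t |Lr| (abs_nonneg _) ε hε
      exact ⟨N0, fun N hN i => h N hN i.1 i.2.1 i.2.2.1 i.2.2.2
        (fun s => r s.1 s.2.1.1 s.2.2) hg⟩)
  intro ε hε
  obtain ⟨N0, h⟩ := key ε hε
  exact ⟨N0, fun N hN θ x0 μ u0 ξ => h N hN (θ, x0, (u0, ξ), μ)⟩
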